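/- arXiv:1607.04728 — 5 statements merged into one kernel-verified Lean document; each statement's English description precedes it below -/
import Mathlib

section
/- Let x be a one-sided infinite word over a finite nonempty alphabet A. Then p_x(n) = O(n) if and only if Fac(x) ⊆ S^2 for some language S ⊆ A* of bounded complexity (i.e., with limsup_n p_S(n) < +∞). -/
open scoped ENNReal Pointwise

universe u

variable {A : Type u}

/-- The factor of `x` of length `n` starting at position `i`. -/
def wordSeg (x : ℕ → A) (i n : ℕ) : List A := (List.range n).map fun j => x (i + j)

/-- The set of finite factors of a one-sided infinite word (including the empty word). -/
def Fac (x : ℕ → A) : Set (List A) := {u | ∃ i n, u = wordSeg x i n}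

/-- The factor of a two-sided word `x` of length `n` starting at position `i`. -/
def wordSegZ (x : ℤ → A) (i : ℤ) (n : ℕ) : List A := (List.range n).map fun j => x (i + j)

/-- The set of finite factors of a two-sided infinite word (including the empty word). -/
def FacZ (x : ℤ → A) : Set (List A) := {u | ∃ (i : ℤ) (n : ℕ), u = wordSegZ x i n}

/-- The complexity of a language: the number of words of length `n` in it. -/
noncomputable def complexity (L : Set (List A)) (n : ℕ) : ℕ :=
  {u ∈ L | u.length = n}.ncard

/-- The accumulative complexity `p*_L(n) = Σ_{i=0}^{n} p_L(i)`. -/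
noncomputable def accComplexity (L : Set (List A)) (n : ℕ) : ℕ :=
  ∑ i ∈ Finset.range (n + 1), complexity L i

/-- Concatenation (product) of two languages. -/
def prodL (S T : Set (List A)) : Set (List A) := {w | ∃ s ∈ S, ∃ t ∈ T, w = s ++ t}

/-- `powL S k` = `S^k`, the set of concatenations of `k` elements of `S`. -/
def powL (S : Set (List A)) : ℕ → Set (List A)
  | 0 => {([] : List A)}
  | k + 1 => prodL (powL S k) S

/-- `f(n) = O(n^α)`. -/
def PolyBound (f : ℕ → ℕ) (α : ℝ) : Prop :=
  ∃ C : ℝ, ∀ n : ℕ, 1 ≤ n → (f n : ℝ) ≤ C * (n : ℝ) ^ α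

/-- The `α`-dimension `d_α(L)`: infimum of the integers `k ≥ 1` such that `L ⊆ S^k`
for some language `S` with `p_S(n) = O(n^α)`, with `inf ∅ = ⊤`. -/
noncomputable def polyDim (α : ℝ) (L : Set (List A)) : ℕ∞ :=
  sInf {k : ℕ∞ | ∃ m : ℕ, k = m ∧ 1 ≤ m ∧
    ∃ S : Set (List A), PolyBound (complexity S) α ∧ L ⊆ powL S m}

/-- The accumulative `α`-dimension `d*_α(L)`. -/
noncomputable def polyDimStar (α : ℝ) (L : Set (List A)) : ℕ∞ :=
  sInf {k : ℕ∞ | ∃ m : ℕ, k = m ∧ 1 ≤ m ∧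
    ∃ S : Set (List A), PolyBound (accComplexity S) α ∧ L ⊆ powL S m}

/-- The cost `c(L)`: infimum of the `α ≥ 0` with `d_α(L) < +∞`, with `inf ∅ = ⊤`. -/
noncomputable def cost (L : Set (List A)) : ℝ≥0∞ :=
  sInf {a : ℝ≥0∞ | ∃ α : ℝ, 0 ≤ α ∧ a = ENNReal.ofReal α ∧ polyDim α L ≠ ⊤}

/-- A one-sided word is ultimately periodic if it is of the form `u v v v ⋯`. -/
def UltimatelyPeriodic (x : ℕ → A) : Prop :=
  ∃ N p : ℕ, 0 < p ∧ ∀ n : ℕ, N ≤ n → x (n + p) = x n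

/-- A two-sided word is eventually periodic if it is periodic far enough to the right
and far enough to the left. -/
def EventuallyPeriodicZ (x : ℤ → A) : Prop :=
  (∃ p : ℕ, 0 < p ∧ ∃ N : ℤ, ∀ n : ℤ, N ≤ n → x (n + p) = x n) ∧
  (∃ p : ℕ, 0 < p ∧ ∃ N : ℤ, ∀ n : ℤ, n ≤ N → x (n - p) = x n)

/-- A one-sided word is recurrent if each of its factors occurs infinitely often. -/
def Recurrent (x : ℕ → A) : Prop :=
  ∀ u ∈ Fac x, ∀ N : ℕ, ∃ i : ℕ, N ≤ i ∧ u = wordSeg x i u.length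

/-- `u` is a right special factor for the language `F`. -/
def RightSpecial (F : Set (List A)) (u : List A) : Prop :=
  u ∈ F ∧ ∃ a b : A, a ≠ b ∧ u ++ [a] ∈ F ∧ u ++ [b] ∈ F

/-- `M` is a `D`-marker set for a word with factor set `F`: every factor of length
at least `D n` contains a factor of length `n` belonging to `M`. -/
def MarkerSet (D : ℕ) (M F : Set (List A)) : Prop :=
  ∀ n : ℕ, 1 ≤ n → ∀ u ∈ F, D * n ≤ u.length →
    ∃ v ∈ M, v.length = n ∧ v <:+: u

/-- A language is factorial if it contains all factors of its members. -/
def IsFactorial (S : Set (List A)) : Prop := ∀ u ∈ S, ∀ v : List A, v <:+: u → v ∈ S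

/-- The bound `Σ_{k ∈ I_n ∩ ℕ} p_M(2^k)(1 + 4 p(3n)/2^k)` where
`I_n = (log₂(n/(2D)), log₂(2n)]`, i.e. the sum is over natural `k` with
`n/(2D) < 2^k ≤ 2n`. -/
noncomputable def markerBound (M F : Set (List A)) (D n : ℕ) : ℝ :=
  ∑ k ∈ (Finset.range (2 * n + 2)).filter (fun k => n < 2 * D * 2 ^ k ∧ 2 ^ k ≤ 2 * n),
    (complexity M (2 ^ k) : ℝ) * (1 + 4 * (complexity F (3 * n) : ℝ) / 2 ^ k)

-- The word `u = ∏_{i=1}^{∞} a b^i = a b a b b a b b b ⋯` over `{a,b}`, with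
-- `a = false`, `b = true`: position `n` carries an `a` iff `n = (i-1)(i+2)/2` for some
-- `i ≥ 1`, i.e. iff `2n = m(m+3)` for some `m ≥ 0`.
open Classical in
noncomputable def uWord (n : ℕ) : Bool :=
  if ∃ m : ℕ, 2 * n = m * (m + 3) then false else true

theorem ws_len (x : ℕ → A) (i n : ℕ) : (wordSeg x i n).length = n := by simp [wordSeg]

theorem ws_eq_iff (x : ℕ → A) (i j n : ℕ) :
    wordSeg x i n = wordSeg x j n ↔ ∀ t, t < n → x (i + t) = x (j + t) := by
  simp [wordSeg, List.map_inj_left]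

theorem ws_append (x : ℕ → A) (i a b : ℕ) :
    wordSeg x i (a + b) = wordSeg x i a ++ wordSeg x (i + a) b := by
  simp [wordSeg, List.range_add, add_assoc]

theorem fin_len [Finite A] (Z : Set (List A)) (n : ℕ) : {u ∈ Z | u.length = n}.Finite :=
  (List.finite_length_eq A n).subset fun _ h => h.2

theorem fac_len (x : ℕ → A) (n : ℕ) :
    {u ∈ Fac x | u.length = n} = Set.range fun i => wordSeg x i n := by
  ext u
  constructor
  · rintro ⟨⟨i, m, rfl⟩, h⟩
    rw [ws_len] at h
    subst h
    exact ⟨i, rfl⟩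
  · rintro ⟨i, rfl⟩
    exact ⟨⟨i, n, rfl⟩, ws_len x i n⟩

theorem cx_mono [Finite A] {Y Z : Set (List A)} (h : Y ⊆ Z) (n : ℕ) :
    complexity Y n ≤ complexity Z n :=
  Set.ncard_le_ncard (fun _ hu => ⟨h hu.1, hu.2⟩) (fin_len Z n)

theorem cx_union (Y Z : Set (List A)) (n : ℕ) :
    complexity (Y ∪ Z) n ≤ complexity Y n + complexity Z n := by
  unfold complexity
  have : {u ∈ Y ∪ Z | u.length = n} = {u ∈ Y | u.length = n} ∪ {u ∈ Z | u.length = n} := by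
    ext u; simp only [Set.mem_union, Set.mem_ofPred_eq]; tauto
  rw [this]
  exact Set.ncard_union_le _ _

theorem cx_biUnion {ι : Type*} (R : Finset ι) (Z : ι → Set (List A)) (n K : ℕ)
    (h : ∀ r ∈ R, complexity (Z r) n ≤ K) :
    complexity {w | ∃ r ∈ R, w ∈ Z r} n ≤ R.card * K := by
  classical
  induction R using Finset.induction_on with
  | empty => simp [complexity]
  | insert a s ha ih =>
    have e : {w | ∃ r ∈ insert a s, w ∈ Z r} = Z a ∪ {w | ∃ r ∈ s, w ∈ Z r} := by
      ext w; simp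
    rw [e, Finset.card_insert_of_notMem ha]
    have h1 := cx_union (Z a) {w | ∃ r ∈ s, w ∈ Z r} n
    have h2 := h a (by simp)
    have h3 := ih (fun r hr => h r (by simp [hr]))
    nlinarith

/-- Counting lemma for words containing a well-separated window. -/
theorem sep_count [Finite A] (x : ℕ → A) (q L o : ℕ) (hL : o + 4 * q ≤ L)
    (B : ℕ → Prop) (inv : ∀ i j, (∀ t, t < 4 * q → x (i + t) = x (j + t)) → B i → B j)
    (hsep : ∀ i j, i < j → j < i + q → B i → B j → False) :
    q * {w | ∃ a, w = wordSeg x a L ∧ B (a + o)}.ncard ≤ complexity (Fac x) (L + q) + q := by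
  classical
  set Y := {w | ∃ a, w = wordSeg x a L ∧ B (a + o)} with hY
  set Y1 := {w | ∃ a, q ≤ a ∧ w = wordSeg x a L ∧ B (a + o)} with hY1
  set Y2 := {w | ∃ a, a < q ∧ w = wordSeg x a L ∧ B (a + o)} with hY2
  have hYu : Y = Y1 ∪ Y2 := by
    ext w
    constructor
    · rintro ⟨a, h⟩
      rcases le_or_gt q a with h1 | h1
      · exact Or.inl ⟨a, h1, h⟩
      · exact Or.inr ⟨a, h1, h⟩
    · rintro (⟨a, _, h⟩ | ⟨a, _, h⟩) <;> exact ⟨a, h⟩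
  have hY2c : Y2.ncard ≤ 1 := by
    refine (Set.ncard_le_one ?_).2 ?_; rotate_left
    · rintro w ⟨a, ha, rfl, hB⟩ w' ⟨a', ha', rfl, hB'⟩
      rcases lt_trichotomy a a' with h | h | h
      · exact (hsep _ _ (by omega) (by omega) hB hB').elim
      · rw [h]
      · exact (hsep _ _ (by omega) (by omega) hB' hB).elim
    · exact (List.finite_length_eq A L).subset (by rintro w ⟨a, _, rfl, _⟩; exact ws_len _ _ _)
  have hY1f : Y1.Finite :=
    (List.finite_length_eq A L).subset (by rintro w ⟨a, _, rfl, _⟩; exact ws_len _ _ _)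
  have hex : ∀ w : List A, ∃ a, w ∈ Y1 → q ≤ a ∧ w = wordSeg x a L ∧ B (a + o) := by
    intro w
    by_cases h : w ∈ Y1
    · obtain ⟨a, ha⟩ := h
      exact ⟨a, fun _ => ha⟩
    · exact ⟨0, fun h' => (h h').elim⟩
  choose f hf using hex
  have key : ∀ b b' j j', j < q → j' < q → (∀ t, t < L + q → x (b + t) = x (b' + t)) →
      B (b + j + o) → B (b' + j' + o) → j = j' := by
    intro b b' j j' hj hj' ht h1 h2
    have h3 : B (b + j' + o) := by
      refine inv _ _ ?_ h2
      intro t ht'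
      have := ht (j' + o + t) (by omega)
      rw [show b' + j' + o + t = b' + (j' + o + t) by ring,
        show b + j' + o + t = b + (j' + o + t) by ring, this]
    rcases lt_trichotomy j j' with h | h | h
    · exact (hsep _ _ (by omega) (by omega) h1 h3).elim
    · exact h
    · exact (hsep _ _ (by omega) (by omega) h3 h1).elim
  have hFf : {u ∈ Fac x | u.length = L + q}.Finite := fin_len _ _
  have hcard : (hY1f.toFinset ×ˢ Finset.range q).card ≤ hFf.toFinset.card := by
    refine Finset.card_le_card_of_injOn (fun z => wordSeg x (f z.1 - z.2) (L + q)) ?_ ?_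
    · rintro ⟨w, j⟩ _
      simp only [Set.Finite.coe_toFinset]
      exact ⟨⟨_, _, rfl⟩, ws_len _ _ _⟩
    · rintro ⟨w, j⟩ h1 ⟨w', j'⟩ h2 heq
      simp only [Finset.coe_product, Set.mem_prod, Set.Finite.coe_toFinset, Finset.coe_range,
        Set.mem_Iio] at h1 h2 heq
      rw [ws_eq_iff] at heq
      obtain ⟨a1, a2, a3⟩ := hf w h1.1
      obtain ⟨b1, b2, b3⟩ := hf w' h2.1
      have hj : j = j' := by
        refine key _ _ j j' h1.2 h2.2 heq ?_ ?_
        · rwa [show f w - j + j + o = f w + o by omega]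
        · rwa [show f w' - j' + j' + o = f w' + o by omega]
      subst hj
      have : w = w' := by
        rw [a2, b2, ws_eq_iff]
        intro t ht
        have := heq (j + t) (by omega)
        rwa [show f w - j + (j + t) = f w + t by omega,
          show f w' - j + (j + t) = f w' + t by omega] at this
      rw [this]
  rw [Finset.card_product, Finset.card_range, ← Set.ncard_eq_toFinset_card _ hY1f,
    ← Set.ncard_eq_toFinset_card _ hFf] at hcard
  have hle : Y.ncard ≤ Y1.ncard + 1 := by
    rw [hYu]; exact (Set.ncard_union_le _ _).trans (by omega)
  calc q * Y.ncard ≤ q * (Y1.ncard + 1) := Nat.mul_le_mul_left _ hle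
    _ = Y1.ncard * q + q := by ring
    _ ≤ _ := by unfold complexity; omega

/-- Right parts and left parts of words cut in the middle of a `B`-window. -/
def cutSet (x : ℕ → A) (q D : ℕ) (B : ℕ → Prop) : Set (List A) :=
  {w | ∃ a l, 2 * q ≤ l ∧ l < 2 * D * q ∧ w = wordSeg x (a + 2 * q) l ∧ B a} ∪
  {w | ∃ a l, 2 * q ≤ l ∧ l < 2 * D * q ∧ w = wordSeg x a l ∧ B (a + (l - 2 * q))}

theorem cutSet_len (x : ℕ → A) (q D : ℕ) (B : ℕ → Prop) :
    ∀ w ∈ cutSet x q D B, 2 * q ≤ w.length ∧ w.length < 2 * D * q := by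
  rintro w (⟨a, l, h1, h2, rfl, _⟩ | ⟨a, l, h1, h2, rfl, _⟩) <;> simp only [ws_len] <;> omega

theorem cutSet_cx [Finite A] (x : ℕ → A) (q D C : ℕ) (hq : 1 ≤ q)
    (hC : ∀ n, 1 ≤ n → complexity (Fac x) n ≤ C * n)
    (B : ℕ → Prop) (inv : ∀ i j, (∀ t, t < 4 * q → x (i + t) = x (j + t)) → B i → B j)
    (hsep : ∀ i j, i < j → j < i + q → B i → B j → False) (l : ℕ) :
    complexity (cutSet x q D B) l ≤ 2 * (C * (2 * D + 3) + 1) := by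
  by_cases hl : 2 * q ≤ l ∧ l < 2 * D * q
  swap
  · have : {u ∈ cutSet x q D B | u.length = l} = ∅ := by
      ext u
      simp only [Set.mem_ofPred_eq, Set.mem_empty_iff_false, iff_false]
      rintro ⟨h, rfl⟩
      exact hl (cutSet_len x q D B u h)
    unfold complexity
    rw [this]; simp
  obtain ⟨hl1, hl2⟩ := hl
  have fin : ∀ o, {w | ∃ a, w = wordSeg x a (l + 2 * q) ∧ B (a + o)}.Finite := fun o =>
    (List.finite_length_eq A (l + 2 * q)).subset (by rintro w ⟨a, rfl, _⟩; exact ws_len _ _ _)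
  have cnt : ∀ o, o + 4 * q ≤ l + 2 * q →
      {w | ∃ a, w = wordSeg x a (l + 2 * q) ∧ B (a + o)}.ncard ≤ C * (2 * D + 3) + 1 := by
    intro o ho
    have h1 := sep_count x q (l + 2 * q) o ho B inv hsep
    have h2 := hC (l + 2 * q + q) (by omega)
    have h3 : C * (l + 2 * q + q) ≤ C * ((2 * D + 3) * q) := Nat.mul_le_mul_left _ (by nlinarith)
    refine Nat.le_of_mul_le_mul_left (c := q) ?_ (by omega)
    nlinarith
  have e1 : {u ∈ cutSet x q D B | u.length = l} ⊆
      (fun w => w.drop (2 * q)) '' {w | ∃ a, w = wordSeg x a (l + 2 * q) ∧ B (a + 0)} ∪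
      (fun w => w.take l) '' {w | ∃ a, w = wordSeg x a (l + 2 * q) ∧ B (a + (l - 2 * q))} := by
    rintro u ⟨⟨a, l', h1, h2, rfl, hB⟩ | ⟨a, l', h1, h2, rfl, hB⟩, hu⟩ <;> rw [ws_len] at hu <;>
      subst hu
    · refine Or.inl ⟨_, ⟨a, rfl, hB⟩, ?_⟩
      simp only
      rw [add_comm l', ws_append, List.drop_left' (ws_len _ _ _)]
    · refine Or.inr ⟨_, ⟨a, rfl, hB⟩, ?_⟩
      simp only
      rw [ws_append, List.take_left' (ws_len _ _ _)]
  unfold complexity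
  refine (Set.ncard_le_ncard e1 (((fin _).image _).union ((fin _).image _))).trans ?_
  refine (Set.ncard_union_le _ _).trans ?_
  have := (Set.ncard_image_le (f := fun w : List A => w.drop (2 * q)) (fin 0)).trans
    (cnt 0 (by omega))
  have := (Set.ncard_image_le (f := fun w : List A => w.take l) (fin (l - 2 * q))).trans
    (cnt (l - 2 * q) (by omega))
  omega

/-- If the window `B` occurs at `i + d`, cut in the middle. -/
theorem cutSet_split (x : ℕ → A) (q D : ℕ) (B : ℕ → Prop) (i n d : ℕ) (h : d + 4 * q ≤ n)
    (hn : n < 2 * D * q) (hB : B (i + d)) :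
    ∃ c, c ≤ n ∧ wordSeg x i c ∈ cutSet x q D B ∧ wordSeg x (i + c) (n - c) ∈ cutSet x q D B := by
  refine ⟨d + 2 * q, by omega, Or.inr ⟨i, _, by omega, by omega, rfl, ?_⟩,
    Or.inl ⟨i + d, n - (d + 2 * q), by omega, by omega, ?_, hB⟩⟩
  · rwa [Nat.add_sub_cancel]
  · rw [add_assoc]

/-- Purely periodic pieces. -/
def perSet (x : ℕ → A) (q D r p : ℕ) : Set (List A) :=
  {w | ∃ a l, 2 * q ≤ l ∧ l < 2 * D * q ∧ w = wordSeg x a l ∧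
      (∀ t, t < 2 * q → x (a + t) = x (r + 2 * q + t)) ∧
      (∀ t, t + p < l → x (a + t) = x (a + t + p))} ∪
  {w | ∃ a l, 2 * q ≤ l ∧ l < 2 * D * q ∧ w = wordSeg x a l ∧
      (∀ t, t < 2 * q → x (a + (l - 2 * q) + t) = x (r + t)) ∧
      (∀ t, t + p < l → x (a + t) = x (a + t + p))}

theorem perSet_len (x : ℕ → A) (q D r p : ℕ) :
    ∀ w ∈ perSet x q D r p, 2 * q ≤ w.length ∧ w.length < 2 * D * q := by
  rintro w (⟨a, l, h1, h2, rfl, _⟩ | ⟨a, l, h1, h2, rfl, _⟩) <;> simp only [ws_len] <;> omega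

theorem perSet_cx [Finite A] (x : ℕ → A) (q D r p : ℕ) (hp : 0 < p) (hpq : p < q) (l : ℕ) :
    complexity (perSet x q D r p) l ≤ 2 := by
  refine (cx_union _ _ l).trans ?_
  refine Nat.add_le_add (b := 1) (d := 1) ?_ ?_
  · unfold complexity
    refine (Set.ncard_le_one (fin_len _ _)).2 ?_
    rintro _ ⟨⟨a, l', h1, h2, rfl, h3, h4⟩, e⟩ _ ⟨⟨a', l'', h1', h2', rfl, h3', h4'⟩, e'⟩
    rw [ws_len] at e e'
    subst e; subst e'
    rw [ws_eq_iff]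
    intro t
    induction t using Nat.strong_induction_on with
    | _ t ih =>
      intro ht
      by_cases h : t < 2 * q
      · rw [h3 t h, h3' t h]
      · have e1 := h4 (t - p) (by omega)
        have e2 := h4' (t - p) (by omega)
        rw [show a + (t - p) + p = a + t by omega] at e1
        rw [show a' + (t - p) + p = a' + t by omega] at e2
        rw [← e1, ← e2]
        exact ih _ (by omega) (by omega)
  · unfold complexity
    refine (Set.ncard_le_one (fin_len _ _)).2 ?_
    rintro _ ⟨⟨a, l', h1, h2, rfl, h3, h4⟩, e⟩ _ ⟨⟨a', l'', h1', h2', rfl, h3', h4'⟩, e'⟩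
    rw [ws_len] at e e'
    subst e; subst e'
    rw [ws_eq_iff]
    have : ∀ s t, t + 1 + s = l'' → x (a + t) = x (a' + t) := by
      intro s
      induction s using Nat.strong_induction_on with
      | _ s ih =>
        intro t ht
        by_cases h : s < 2 * q
        · have e1 := h3 (t - (l'' - 2 * q)) (by omega)
          have e2 := h3' (t - (l'' - 2 * q)) (by omega)
          rw [show a + (l'' - 2 * q) + (t - (l'' - 2 * q)) = a + t by omega] at e1
          rw [show a' + (l'' - 2 * q) + (t - (l'' - 2 * q)) = a' + t by omega] at e2
          rw [e1, e2]
        · rw [h4 t (by omega), h4' t (by omega)]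
          have := ih (s - p) (by omega) (t + p) (by omega)
          rwa [← add_assoc, ← add_assoc] at this
    intro t ht
    exact this (l'' - 1 - t) t (by omega)

theorem piece [Finite A] (x : ℕ → A) (q D C r : ℕ) (hq : 1 ≤ q)
    (hC : ∀ n, 1 ≤ n → complexity (Fac x) n ≤ C * n) :
    ∃ Z : Set (List A), (∀ w ∈ Z, 2 * q ≤ w.length ∧ w.length < 2 * D * q) ∧
      (∀ l, complexity Z l ≤ 4 * (C * (2 * D + 3) + 1) + 2) ∧
      ∀ i n d, d + 4 * q ≤ n → n < 2 * D * q →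
        (∀ t, t < 4 * q → x (i + d + t) = x (r + t)) →
        ∃ c, c ≤ n ∧ wordSeg x i c ∈ Z ∧ wordSeg x (i + c) (n - c) ∈ Z := by
  by_cases hper : ∃ p, 0 < p ∧ p < q ∧ ∀ t, t + p < 4 * q → x (r + t) = x (r + t + p)
  swap
  · push Not at hper
    set B : ℕ → Prop := fun i => ∀ t, t < 4 * q → x (i + t) = x (r + t) with hB
    refine ⟨cutSet x q D B, cutSet_len x q D B, ?_, ?_⟩
    · intro l
      refine (cutSet_cx x q D C hq hC B ?_ ?_ l).trans (by omega)
      · intro i j hij h t ht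
        rw [← hij t ht, h t ht]
      · intro i j hij hjq hi hj
        obtain ⟨t, ht, hne⟩ := hper (j - i) (by omega) (by omega)
        apply hne
        rw [← hj t (by omega), add_assoc r, ← hi (t + (j - i)) ht]
        congr 1; omega
    · intro i n d h hn hm
      exact cutSet_split x q D B i n d h hn hm
  obtain ⟨p, hp, hpq, hper⟩ := hper
  set B2 : ℕ → Prop := fun i => x (i + (4 * q - 1)) ≠ x (i + (4 * q - 1 - p)) ∧
    ∀ t, t + p < 4 * q - 1 → x (i + t) = x (i + (t + p)) with hB2
  set B3 : ℕ → Prop := fun i => x (i + 0) ≠ x (i + p) ∧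
    ∀ t, 1 ≤ t → t + p < 4 * q → x (i + t) = x (i + (t + p)) with hB3
  refine ⟨cutSet x q D B2 ∪ cutSet x q D B3 ∪ perSet x q D r p, ?_, ?_, ?_⟩
  · rintro w ((h | h) | h)
    · exact cutSet_len _ _ _ _ w h
    · exact cutSet_len _ _ _ _ w h
    · exact perSet_len _ _ _ _ _ w h
  · intro l
    have h1 := cx_union (cutSet x q D B2 ∪ cutSet x q D B3) (perSet x q D r p) l
    have h2 := cx_union (cutSet x q D B2) (cutSet x q D B3) l
    have h3 := perSet_cx x q D r p hp hpq l
    have h4 : complexity (cutSet x q D B2) l ≤ 2 * (C * (2 * D + 3) + 1) := by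
      refine cutSet_cx x q D C hq hC B2 ?_ ?_ l
      · rintro i j hij ⟨ha, hb⟩
        refine ⟨?_, ?_⟩
        · rwa [← hij _ (by omega), ← hij _ (by omega)]
        · intro t ht
          rw [← hij _ (by omega), ← hij _ (by omega)]
          exact hb t ht
      · rintro i j hij hjq ⟨ha, hb⟩ ⟨hc, hd⟩
        apply ha
        have := hd (4 * q - 1 - p - (j - i)) (by omega)
        rw [show i + (4 * q - 1) = j + (4 * q - 1 - p - (j - i) + p) by omega, ← this]
        congr 1; omega
    have h5 : complexity (cutSet x q D B3) l ≤ 2 * (C * (2 * D + 3) + 1) := by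
      refine cutSet_cx x q D C hq hC B3 ?_ ?_ l
      · rintro i j hij ⟨ha, hb⟩
        refine ⟨?_, ?_⟩
        · rwa [← hij _ (by omega), ← hij _ (by omega)]
        · intro t h1 ht
          rw [← hij _ (by omega), ← hij _ (by omega)]
          exact hb t h1 ht
      · rintro i j hij hjq ⟨ha, hb⟩ ⟨hc, hd⟩
        apply hc
        have := hb (j - i) (by omega) (by omega)
        rw [show j + 0 = i + (j - i) by omega, this]
        congr 1; omega
    omega
  · intro i n d h hn hm
    have hrun : ∀ t, d ≤ t → t + p < d + 4 * q → x (i + t) = x (i + (t + p)) := by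
      intro t h1 h2
      have e1 := hm (t - d) (by omega)
      have e2 := hm (t - d + p) (by omega)
      have e3 := hper (t - d) (by omega)
      rw [show i + d + (t - d) = i + t by omega] at e1
      rw [show i + d + (t - d + p) = i + (t + p) by omega] at e2
      rw [e1, e2, e3, add_assoc]
    by_cases hR : ∃ t, d ≤ t ∧ t + p < n ∧ x (i + t) ≠ x (i + (t + p))
    · classical
      obtain ⟨t, ⟨ht1, ht2, ht3⟩, hmin⟩ : ∃ t, (d ≤ t ∧ t + p < n ∧ x (i + t) ≠ x (i + (t + p))) ∧
          ∀ s, s < t → ¬ (d ≤ s ∧ s + p < n ∧ x (i + s) ≠ x (i + (s + p))) :=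
        ⟨Nat.find hR, Nat.find_spec hR, fun s hs => Nat.find_min hR hs⟩
      have ht4 : d + 4 * q ≤ t + p := by
        by_contra hlt
        exact ht3 (hrun t ht1 (by omega))
      obtain ⟨c, hc, hc1, hc2⟩ := cutSet_split x q D B2 i n (t + p + 1 - 4 * q) (by omega) hn (by
        refine ⟨?_, ?_⟩
        · intro he
          apply ht3
          rw [show i + t = i + (t + p + 1 - 4 * q) + (4 * q - 1 - p) by omega, ← he]
          congr 1; omega
        · intro s hs
          by_contra hne
          refine hmin (t + p + 1 - 4 * q + s) (by omega) ⟨by omega, by omega, ?_⟩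
          intro he
          apply hne
          rw [show i + (t + p + 1 - 4 * q) + s = i + (t + p + 1 - 4 * q + s) by omega, he]
          congr 1; omega)
      exact ⟨c, hc, Or.inl (Or.inl hc1), Or.inl (Or.inl hc2)⟩
    push Not at hR
    by_cases hLft : ∃ s, s < d ∧ x (i + (d - 1 - s)) ≠ x (i + (d - 1 - s + p))
    · classical
      obtain ⟨s, ⟨hs1, hs2⟩, hmin⟩ : ∃ s, (s < d ∧ x (i + (d - 1 - s)) ≠ x (i + (d - 1 - s + p))) ∧
          ∀ s', s' < s → ¬ (s' < d ∧ x (i + (d - 1 - s')) ≠ x (i + (d - 1 - s' + p))) :=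
        ⟨Nat.find hLft, Nat.find_spec hLft, fun s hs => Nat.find_min hLft hs⟩
      obtain ⟨c, hc, hc1, hc2⟩ := cutSet_split x q D B3 i n (d - 1 - s) (by omega) hn (by
        refine ⟨?_, ?_⟩
        · rwa [add_zero, add_assoc]
        · intro t ht1 ht2
          rw [add_assoc, add_assoc, ← add_assoc (d - 1 - s)]
          by_cases htd : d ≤ d - 1 - s + t
          · exact hR _ htd (by omega)
          · by_contra hne
            refine hmin (s - t) (by omega) ⟨by omega, ?_⟩
            rwa [show d - 1 - (s - t) = d - 1 - s + t by omega])
      exact ⟨c, hc, Or.inl (Or.inr hc1), Or.inl (Or.inr hc2)⟩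
    push Not at hLft
    have hall : ∀ t, t + p < n → x (i + t) = x (i + t + p) := by
      intro t ht
      by_cases htd : d ≤ t
      · rw [add_assoc]; exact hR t htd ht
      · have := hLft (d - 1 - t) (by omega)
        rw [show d - 1 - (d - 1 - t) = t by omega] at this
        rw [this, add_assoc]
    refine ⟨d + 2 * q, by omega, Or.inr (Or.inr ⟨i, _, by omega, by omega, rfl, ?_, ?_⟩),
      Or.inr (Or.inl ⟨_, _, by omega, by omega, rfl, ?_, ?_⟩)⟩
    · intro t ht
      rw [Nat.add_sub_cancel]
      exact hm t (by omega)
    · intro t ht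
      exact hall t (by omega)
    · intro t ht
      have := hm (2 * q + t) (by omega)
      rwa [← add_assoc, ← add_assoc, add_assoc i] at this
    · intro t ht
      have := hall (d + 2 * q + t) (by omega)
      rwa [← add_assoc] at this

/-- Marker lemma at one scale. -/
theorem markers [Finite A] (x : ℕ → A) (C : ℕ)
    (hC : ∀ n, 1 ≤ n → complexity (Fac x) n ≤ C * n) (hx : ¬ UltimatelyPeriodic x)
    (N : ℕ) (hN : 1 ≤ N) :
    ∃ R : Finset ℕ, R.card ≤ 2 * C ∧ ∀ i, ∃ d, d ≤ 2 * C * N ∧ ∃ r ∈ R,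
      ∀ t, t < N → x (i + d + t) = x (r + t) := by
  classical
  obtain ⟨m, hm1, hm2, hm3⟩ : ∃ m, N ≤ m ∧ m < 2 * N ∧
      complexity (Fac x) (m + 1) ≤ complexity (Fac x) m + 2 * C := by
    by_contra hcon
    push Not at hcon
    have : ∀ j, j ≤ N → (2 * C + 1) * j ≤ complexity (Fac x) (N + j) := by
      intro j
      induction j with
      | zero => simp
      | succ j ih =>
        intro hj
        have h1 := ih (by omega)
        have h2 := hcon (N + j) (by omega) (by omega)
        rw [← add_assoc]
        nlinarith
    have h1 := this N le_rfl
    have h2 := hC (N + N) (by omega)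
    nlinarith
  set F : ℕ → Finset (List A) := fun n => (fin_len (Fac x) n).toFinset with hF
  have hFc : ∀ n, (F n).card = complexity (Fac x) n := fun n =>
    (Set.ncard_eq_toFinset_card _ (fin_len (Fac x) n)).symm
  have hFm : ∀ n w, w ∈ F n ↔ ∃ i, wordSeg x i n = w := by
    intro n w
    rw [hF]
    simp only [Set.Finite.mem_toFinset]
    rw [fac_len]; rfl
  have hex : ∀ n (w : List A), ∃ i, w ∈ F n → wordSeg x i n = w := by
    intro n w
    by_cases h : w ∈ F n
    · obtain ⟨i, hi⟩ := (hFm n w).1 h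
      exact ⟨i, fun _ => hi⟩
    · exact ⟨0, fun h' => (h h').elim⟩
  choose pos hpos using hex
  set T : Finset (List A) := (F m).image (fun w => wordSeg x (pos m w) (m + 1)) with hT
  have hTsub : T ⊆ F (m + 1) := by
    intro w hw
    obtain ⟨v, _, rfl⟩ := Finset.mem_image.1 hw
    exact (hFm _ _).2 ⟨_, rfl⟩
  have hTc : T.card = (F m).card := by
    refine Finset.card_image_of_injOn ?_
    intro w hw w' hw' he
    simp only at he
    rw [← hpos m w hw, ← hpos m w' hw', ws_eq_iff]
    rw [ws_eq_iff] at he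
    intro t ht
    exact he t (by omega)
  set G := F (m + 1) \ T with hG
  have hGc : G.card ≤ 2 * C := by
    rw [hG, Finset.card_sdiff_of_subset hTsub, hTc, hFc, hFc]
    omega
  refine ⟨G.image (pos (m + 1)), Finset.card_image_le.trans hGc, ?_⟩
  set Mk : ℕ → Prop := fun i => ∃ r ∈ G.image (pos (m + 1)), wordSeg x i m = wordSeg x r m with hMk
  have hdet : ∀ i j, ¬ Mk i → wordSeg x i m = wordSeg x j m →
      wordSeg x (i + 1) m = wordSeg x (j + 1) m := by
    have hun : ∀ i, ¬ Mk i → x (i + m) = x (pos m (wordSeg x i m) + m) := by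
      intro i hi
      have h1 : wordSeg x i (m + 1) ∈ T := by
        by_contra hnT
        have hg : wordSeg x i (m + 1) ∈ G :=
          Finset.mem_sdiff.2 ⟨(hFm _ _).2 ⟨i, rfl⟩, hnT⟩
        refine hi ⟨_, Finset.mem_image_of_mem _ hg, ?_⟩
        have := hpos (m + 1) _ (Finset.mem_sdiff.1 hg).1
        rw [ws_eq_iff] at this ⊢
        intro t ht
        exact (this t (by omega)).symm
      obtain ⟨v, hv, he⟩ := Finset.mem_image.1 h1
      rw [ws_eq_iff] at he
      have hv' : v = wordSeg x i m := by
        rw [← hpos m v hv, ws_eq_iff]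
        intro t ht
        exact he t (by omega)
      rw [← hv', he m (by omega)]
    intro i j hi hij
    have hj : ¬ Mk j := by
      rintro ⟨r, hr, h⟩
      exact hi ⟨r, hr, hij.trans h⟩
    have e1 := hun i hi
    have e2 := hun j hj
    rw [hij, ← e2] at e1
    rw [ws_eq_iff] at hij ⊢
    intro t ht
    by_cases htm : t + 1 < m
    · have := hij (t + 1) htm
      rwa [show i + 1 + t = i + (t + 1) by omega, show j + 1 + t = j + (t + 1) by omega]
    · rwa [show i + 1 + t = i + m by omega, show j + 1 + t = j + m by omega]
  intro i
  by_contra hcon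
  push Not at hcon
  have hno : ∀ d, d ≤ (F m).card → ¬ Mk (i + d) := by
    rintro d hd ⟨r, hr, he⟩
    have h1 : (F m).card ≤ 2 * C * N := by
      rw [hFc]
      refine (hC m (by omega)).trans ?_
      nlinarith
    obtain ⟨t, ht, hne⟩ := hcon d (hd.trans h1) r hr
    exact hne ((ws_eq_iff _ _ _ _).1 he t (by omega))
  obtain ⟨d, hd, d', hd', hne, he⟩ := Finset.exists_ne_map_eq_of_card_lt_of_maps_to
    (s := Finset.range ((F m).card + 1)) (t := F m) (by simp)
    (f := fun d => wordSeg x (i + d) m) (fun d _ => (hFm _ _).2 ⟨_, rfl⟩)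
  have hwl : ∃ d P, 0 < P ∧ d + P ≤ (F m).card ∧
      wordSeg x (i + d + P) m = wordSeg x (i + d) m := by
    simp only [Finset.mem_range] at hd hd' he
    rcases Nat.lt_or_gt_of_ne hne with h | h
    · refine ⟨d, d' - d, by omega, by omega, ?_⟩
      rw [show i + d + (d' - d) = i + d' by omega]; exact he.symm
    · refine ⟨d', d - d', by omega, by omega, ?_⟩
      rw [show i + d' + (d - d') = i + d by omega]; exact he
  obtain ⟨d, P, hP, hdP, hrep⟩ := hwl
  have hall : ∀ t, ¬ Mk (i + d + t) ∧ wordSeg x (i + d + t + P) m = wordSeg x (i + d + t) m := by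
    intro t
    induction t using Nat.strong_induction_on with
    | _ t ih =>
      constructor
      · by_cases ht : t ≤ P
        · rw [add_assoc]
          exact hno _ (by omega)
        · obtain ⟨h1, h2⟩ := ih (t - P) (by omega)
          rw [show i + d + (t - P) + P = i + d + t by omega] at h2
          rintro ⟨r, hr, h⟩
          exact h1 ⟨r, hr, h2.symm.trans h⟩
      · rcases t with _ | t
        · exact hrep
        · obtain ⟨h1, h2⟩ := ih t (by omega)
          have := hdet _ _ h1 h2.symm
          rw [show i + d + (t + 1) + P = i + d + t + P + 1 by omega,
            show i + d + (t + 1) = i + d + t + 1 by omega]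
          exact this.symm
  apply hx
  refine ⟨i + d, P, hP, ?_⟩
  intro n hn
  have := (ws_eq_iff _ _ _ _).1 (hall (n - (i + d))).2 0 (by omega)
  rwa [show i + d + (n - (i + d)) = n by omega] at this

theorem up_case [Finite A] (x : ℕ → A) (hx : UltimatelyPeriodic x) :
    ∃ C : ℕ, ∀ n, complexity (Fac x) n ≤ C := by
  classical
  obtain ⟨N, p, hp, h⟩ := hx
  have hred : ∀ i, ∃ j, j < N + p ∧ ∀ t, x (i + t) = x (j + t) := by
    intro i
    induction i using Nat.strong_induction_on with
    | _ i ih =>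
      by_cases hi : i < N + p
      · exact ⟨i, hi, fun _ => rfl⟩
      · obtain ⟨j, hj, hjt⟩ := ih (i - p) (by omega)
        refine ⟨j, hj, fun t => ?_⟩
        rw [← hjt, ← h (i - p + t) (by omega)]
        congr 1; omega
  refine ⟨N + p, fun n => ?_⟩
  unfold complexity
  rw [fac_len]
  have : (Set.range fun i => wordSeg x i n) ⊆
      (((Finset.range (N + p)).image fun i => wordSeg x i n : Finset (List A)) : Set (List A)) := by
    rintro _ ⟨i, rfl⟩
    obtain ⟨j, hj, hjt⟩ := hred i
    simp only [Finset.coe_image, Finset.coe_range]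
    exact ⟨j, hj, (ws_eq_iff _ _ _ _).2 fun t _ => (hjt t).symm⟩
  refine (Set.ncard_le_ncard this (Finset.finite_toSet _)).trans ?_
  rw [Set.ncard_coe_finset]
  exact Finset.card_image_le.trans (by simp)

theorem mem_pow_two (S : Set (List A)) (u : List A) :
    u ∈ powL S 2 ↔ ∃ s ∈ S, ∃ t ∈ S, u = s ++ t := by
  simp [powL, prodL]

theorem forward [Finite A] (x : ℕ → A) (C : ℕ)
    (hC : ∀ n, 1 ≤ n → complexity (Fac x) n ≤ C * n) :
    ∃ S : Set (List A), (∃ C : ℕ, ∀ n : ℕ, complexity S n ≤ C) ∧ Fac x ⊆ powL S 2 := by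
  classical
  by_cases hx : UltimatelyPeriodic x
  · refine ⟨Fac x, up_case x hx, ?_⟩
    intro u hu
    exact (mem_pow_two _ _).2 ⟨u, hu, [], ⟨0, 0, rfl⟩, by simp⟩
  set D := 8 * C + 4 with hD
  set K := 4 * (C * (2 * D + 3) + 1) + 2 with hK
  have hscale : ∀ k : ℕ, ∃ Z : Set (List A),
      (∀ w ∈ Z, 2 * 2 ^ k ≤ w.length ∧ w.length < 2 * D * 2 ^ k) ∧
      (∀ l, complexity Z l ≤ 2 * C * K) ∧
      ∀ i n, D * 2 ^ k ≤ n → n < 2 * D * 2 ^ k →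
        ∃ c, c ≤ n ∧ wordSeg x i c ∈ Z ∧ wordSeg x (i + c) (n - c) ∈ Z := by
    intro k
    have hq : 1 ≤ 2 ^ k := Nat.one_le_two_pow
    generalize 2 ^ k = q at hq
    obtain ⟨R, hR, hRm⟩ := markers x C hC hx (4 * q) (by omega)
    choose Z hZ1 hZ2 hZ3 using fun r => piece x q D C r hq hC
    refine ⟨{w | ∃ r ∈ R, w ∈ Z r}, ?_, ?_, ?_⟩
    · rintro w ⟨r, _, hw⟩
      exact hZ1 r w hw
    · intro l
      exact (cx_biUnion R Z l K fun r _ => hZ2 r l).trans (Nat.mul_le_mul_right _ hR)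
    · intro i n h1 h2
      obtain ⟨d, hd, r, hr, ht⟩ := hRm i
      obtain ⟨c, hc, hc1, hc2⟩ := hZ3 r i n d (by rw [hD] at h1; nlinarith) h2 ht
      exact ⟨c, hc, ⟨r, hr, hc1⟩, ⟨r, hr, hc2⟩⟩
  choose Z hZ1 hZ2 hZ3 using hscale
  set Sh : Set (List A) := {w | w.length < D} with hSh
  have hShf : Sh.Finite := List.finite_length_lt A D
  refine ⟨Sh ∪ {w | ∃ k, w ∈ Z k}, ⟨Sh.ncard + (2 * D + 1) * (2 * C * K), ?_⟩, ?_⟩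
  · intro l
    refine (cx_union _ _ l).trans (Nat.add_le_add ?_ ?_)
    · exact Set.ncard_le_ncard (fun _ h => h.1) hShf
    · have : complexity {w | ∃ k, w ∈ Z k} l ≤
          complexity {w | ∃ k ∈ Finset.Icc (Nat.log 2 l - 2 * D) (Nat.log 2 l), w ∈ Z k} l := by
        refine Set.ncard_le_ncard ?_ (fin_len _ _)
        rintro w ⟨⟨k, hk⟩, rfl⟩
        refine ⟨⟨k, ?_, hk⟩, rfl⟩
        obtain ⟨h1, h2⟩ := hZ1 k w hk
        have hpk : 0 < 2 ^ k := by positivity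
        have hl0 : w.length ≠ 0 := by omega
        have h3 : k ≤ Nat.log 2 w.length := Nat.le_log_of_pow_le (by norm_num) (by omega)
        have h4 := Nat.pow_log_le_self 2 hl0
        rw [Finset.mem_Icc]
        refine ⟨?_, h3⟩
        obtain ⟨e, he⟩ := Nat.exists_eq_add_of_le h3
        rw [he] at h4 ⊢
        have h5 : 2 ^ k * 2 ^ e < 2 ^ k * (2 * D) := by
          rw [← pow_add]; linarith
        have h6 := Nat.lt_of_mul_lt_mul_left h5
        have h7 : e < 2 ^ e := Nat.lt_two_pow_self
        omega
      refine this.trans ((cx_biUnion _ Z l (2 * C * K) fun k _ => hZ2 k l).trans ?_)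
      refine Nat.mul_le_mul_right _ ?_
      rw [Nat.card_Icc]; omega
  · rintro u ⟨i, n, rfl⟩
    rw [mem_pow_two]
    by_cases hn : n < D
    · refine ⟨_, Or.inl ?_, [], Or.inl ?_, (List.append_nil _).symm⟩
      · simpa [hSh, ws_len] using hn
      · simp [hSh, hD]
    · have hDp : 0 < D := by omega
      have h0 : n / D ≠ 0 := (Nat.div_pos (by omega) hDp).ne'
      have h1 := Nat.pow_log_le_self 2 h0
      have h2 := Nat.lt_pow_succ_log_self (b := 2) (by norm_num) (n / D)
      rw [Nat.le_div_iff_mul_le hDp] at h1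
      rw [Nat.div_lt_iff_lt_mul hDp, pow_succ] at h2
      obtain ⟨c, hc, hc1, hc2⟩ := hZ3 (Nat.log 2 (n / D)) i n (by linarith) (by linarith)
      refine ⟨_, Or.inr ⟨_, hc1⟩, _, Or.inr ⟨_, hc2⟩, ?_⟩
      rw [← ws_append, Nat.add_sub_cancel' hc]

theorem backward [Finite A] (L S : Set (List A)) (C : ℕ) (hS : ∀ n, complexity S n ≤ C)
    (hL : L ⊆ powL S 2) (n : ℕ) : complexity L n ≤ (n + 1) * (C * C) := by
  classical
  refine (cx_mono (Z := {w | ∃ c ∈ Finset.range (n + 1),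
    w ∈ {w | w.length = n → ∃ s ∈ S, ∃ t ∈ S, s.length = c ∧ t.length = n - c ∧ w = s ++ t}})
    ?_ n).trans ((cx_biUnion _ _ n (C * C) ?_).trans (by simp))
  · intro w hw
    obtain ⟨s, hs, t, ht, rfl⟩ := (mem_pow_two _ _).1 (hL hw)
    by_cases hl : (s ++ t).length = n
    · rw [List.length_append] at hl
      exact ⟨s.length, by simp; omega, fun _ => ⟨s, hs, t, ht, rfl, by omega, rfl⟩⟩
    · exact ⟨0, by simp, fun h => (hl h).elim⟩
  · intro c _
    refine le_trans ?_ (Nat.mul_le_mul (hS c) (hS (n - c)))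
    unfold complexity
    rw [← Set.ncard_prod]
    refine (Set.ncard_le_ncard (t := (fun z : List A × List A => z.1 ++ z.2) ''
      ({u ∈ S | u.length = c} ×ˢ {u ∈ S | u.length = n - c})) ?_ ?_).trans ?_
    · rintro w ⟨hw, hl⟩
      obtain ⟨s, hs, t, ht, h1, h2, rfl⟩ := hw hl
      exact ⟨(s, t), ⟨⟨hs, h1⟩, ⟨ht, h2⟩⟩, rfl⟩
    · exact ((fin_len _ _).prod (fin_len _ _)).image _
    · exact Set.ncard_image_le ((fin_len _ _).prod (fin_len _ _))

/-- `p_x(n) = O(n)` iff `Fac(x) ⊆ S²` for some language `S` of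
bounded complexity. -/
theorem stmt0 (A : Type u) [Fintype A] [Nonempty A] (x : ℕ → A) :
    (∃ C : ℝ, ∀ n : ℕ, 1 ≤ n → (complexity (Fac x) n : ℝ) ≤ C * n) ↔
    (∃ S : Set (List A), (∃ C : ℕ, ∀ n : ℕ, complexity S n ≤ C) ∧ Fac x ⊆ powL S 2) := by
  constructor
  · rintro ⟨C, hC⟩
    refine forward x ⌈C⌉₊ fun n hn => ?_
    have h1 := hC n hn
    have h2 : C * n ≤ (⌈C⌉₊ : ℝ) * n := by
      gcongr
      exact Nat.le_ceil C
    exact_mod_cast h1.trans h2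
  · rintro ⟨S, ⟨C, hC⟩, hS⟩
    refine ⟨2 * (C * C), fun n hn => ?_⟩
    have h1 := backward (Fac x) S C hC hS n
    have h2 : (n + 1) * (C * C) ≤ 2 * (C * C) * n := by nlinarith [Nat.zero_le (C * C)]
    exact_mod_cast h1.trans h2
end

section
/- Let x ∈ {0,1}^ℕ be a Sturmian word, i.e., p_x(n) = n + 1 for every n ≥ 0. Then there exist languages S, T ⊆ {0,1}* with p_S(n) = p_T(n) = 1 for every n ≥ 0 such that Fac(x) ⊆ S T (the set of concatenations s t with s ∈ S, t ∈ T). Consequently d_0(x) = 2. -/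
open scoped ENNReal Pointwise

universe u

variable {A : Type u}

namespace SturmAux

lemma seg_len (x : ℕ → A) (i n : ℕ) : (wordSeg x i n).length = n := by simp [wordSeg]

lemma segZ_len (x : ℤ → A) (i : ℤ) (n : ℕ) : (wordSegZ x i n).length = n := by simp [wordSegZ]

lemma seg_snoc (x : ℕ → A) (i n : ℕ) : wordSeg x i (n + 1) = wordSeg x i n ++ [x (i + n)] := by
  simp [wordSeg, List.range_succ]

lemma segZ_snoc (x : ℤ → A) (i : ℤ) (n : ℕ) :
    wordSegZ x i (n + 1) = wordSegZ x i n ++ [x (i + n)] := by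
  simp [wordSegZ, List.range_succ]

lemma seg_cons (x : ℕ → A) (i n : ℕ) : wordSeg x i (n + 1) = x i :: wordSeg x (i + 1) n := by
  induction n with
  | zero => simp [wordSeg]
  | succ n ih =>
    rw [seg_snoc, ih, seg_snoc x (i + 1) n]
    rw [show i + (n + 1) = i + 1 + n by omega]; simp

lemma segZ_cons (x : ℤ → A) (i : ℤ) (n : ℕ) :
    wordSegZ x i (n + 1) = x i :: wordSegZ x (i + 1) n := by
  induction n with
  | zero => simp [wordSegZ]
  | succ n ih =>
    rw [segZ_snoc, ih, segZ_snoc x (i + 1) n]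
    have : i + ((n + 1 : ℕ) : ℤ) = i + 1 + (n : ℤ) := by push_cast; ring
    rw [this]; simp

lemma segZ_append (x : ℤ → A) (i : ℤ) (m n : ℕ) :
    wordSegZ x i (m + n) = wordSegZ x i m ++ wordSegZ x (i + m) n := by
  induction n with
  | zero => simp [wordSegZ]
  | succ n ih =>
    rw [← Nat.add_assoc, segZ_snoc, ih, segZ_snoc]
    simp [add_assoc]

lemma seg_mem (x : ℕ → A) (i n : ℕ) : wordSeg x i n ∈ Fac x := ⟨i, n, rfl⟩

lemma mem_iff (x : ℕ → A) (u : List A) : u ∈ Fac x ↔ ∃ i, u = wordSeg x i u.length := by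
  constructor
  · rintro ⟨i, n, rfl⟩
    exact ⟨i, by rw [seg_len]⟩
  · rintro ⟨i, h⟩
    exact ⟨i, _, h⟩

lemma mem_pre (x : ℕ → A) (u : List A) (a : A) (h : u ++ [a] ∈ Fac x) : u ∈ Fac x := by
  obtain ⟨i, h⟩ := (mem_iff x _).1 h
  rw [List.length_append, List.length_singleton, seg_snoc] at h
  have := List.append_inj_left h (by rw [seg_len])
  rw [this]; exact seg_mem _ _ _

lemma mem_tail (x : ℕ → A) (u : List A) (a : A) (h : a :: u ∈ Fac x) : u ∈ Fac x := by
  obtain ⟨i, h⟩ := (mem_iff x _).1 h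
  rw [List.length_cons, seg_cons] at h
  rw [(List.cons.inj h).2]; exact seg_mem _ _ _

lemma right_ext (x : ℕ → A) (u : List A) (h : u ∈ Fac x) : ∃ a, u ++ [a] ∈ Fac x := by
  obtain ⟨i, h⟩ := (mem_iff x _).1 h
  refine ⟨x (i + u.length), ?_⟩
  have := seg_snoc x i u.length
  rw [← h] at this
  rw [← this]; exact seg_mem _ _ _

/-- words of length `n` -/
def Ln (x : ℕ → A) (n : ℕ) : Set (List A) := {u ∈ Fac x | u.length = n}

lemma fin_len (P : List Bool → Prop) (n : ℕ) : {u : List Bool | P u ∧ u.length = n}.Finite :=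
  (List.finite_length_eq Bool n).subset (fun _ h => h.2)

lemma count_abs {α β : Type*} (P : Set α) (Q : Set β) (hP : P.Finite) (hQ : Q.Finite)
    (f : α → β) (hf : ∀ a ∈ P, f a ∈ Q) (hs : ∀ b ∈ Q, ∃ a ∈ P, f a = b)
    (hc : P.ncard = Q.ncard + 1) :
    (∃ a ∈ P, ∃ a' ∈ P, a ≠ a' ∧ f a = f a') ∧
    (∀ a ∈ P, ∀ a' ∈ P, ∀ c ∈ P, ∀ c' ∈ P, a ≠ a' → f a = f a' → c ≠ c' → f c = f c' →
      f a = f c) := by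
  constructor
  · by_contra hcon
    push Not at hcon
    have : P.ncard ≤ Q.ncard := by
      apply Set.ncard_le_ncard_of_injOn f hf _ hQ
      intro a ha b hb hab
      by_contra hne
      exact hcon a ha b hb hne hab
    omega
  · intro a ha a' ha' c hc1 c' hc' hne hfa hne' hfc
    by_contra hcon
    have hac : a ≠ c := fun h => hcon (by rw [h])
    have h1 : Q ⊆ f '' (P \ {a, c}) := by
      intro b hb
      by_cases hba : b = f a
      · refine ⟨a', ⟨ha', ?_⟩, by rw [hba, hfa]⟩
        simp only [Set.mem_insert_iff, Set.mem_singleton_iff, not_or]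
        refine ⟨hne.symm, ?_⟩
        rintro rfl
        exact hcon hfa
      · by_cases hbc : b = f c
        · refine ⟨c', ⟨hc', ?_⟩, by rw [hbc, hfc]⟩
          simp only [Set.mem_insert_iff, Set.mem_singleton_iff, not_or]
          refine ⟨?_, hne'.symm⟩
          rintro rfl
          exact hcon hfc.symm
        · obtain ⟨d, hd, rfl⟩ := hs b hb
          refine ⟨d, ⟨hd, ?_⟩, rfl⟩
          simp only [Set.mem_insert_iff, Set.mem_singleton_iff, not_or]
          exact ⟨fun h => hba (by rw [h]), fun h => hbc (by rw [h])⟩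
    have hfin : (P \ {a, c}).Finite := hP.subset Set.diff_subset
    have h2 := Set.ncard_le_ncard h1 (hfin.image f)
    have h3 := Set.ncard_image_le (f := f) hfin
    have h4 : ({a, c} : Set α).ncard = 2 := Set.ncard_pair hac
    have h5 : (P \ {a, c}).ncard + ({a, c} : Set α).ncard = P.ncard :=
      Set.ncard_diff_add_ncard_of_subset (by
        rintro d (rfl | rfl) <;> assumption) hP
    omega

lemma recur (x : ℕ → Bool) (hx : ∀ n : ℕ, complexity (Fac x) n = n + 1) : Recurrent x := by
  intro u hu N
  by_contra hcon
  push Not at hcon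
  let G : ℕ → Set (List Bool) := fun m => {w | (∃ i, N ≤ i ∧ w = wordSeg x i m) ∧ w.length = m}
  have Gfin : ∀ m, (G m).Finite := fun m => fin_len _ m
  -- no level is deterministic
  have nodet : ∀ m, ¬ (∀ i j, N ≤ i → N ≤ j → wordSeg x i m = wordSeg x j m →
      wordSeg x i (m + 1) = wordSeg x j (m + 1)) := by
    intro m hdet
    have hk : ∀ k, ∀ i j, N ≤ i → N ≤ j → wordSeg x i m = wordSeg x j m →
        wordSeg x i (m + k) = wordSeg x j (m + k) := by
      intro k
      induction k with
      | zero => intro i j _ _ h; exact h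
      | succ k ih =>
        intro i j hi hj h
        have h1 := hdet i j hi hj h
        rw [seg_cons, seg_cons] at h1
        obtain ⟨h2, h3⟩ := List.cons.inj h1
        have h4 := ih (i + 1) (j + 1) (by omega) (by omega) h3
        rw [← Nat.add_assoc, seg_cons, seg_cons, h2, h4]
    have hcard : ∀ k, (G (m + k)).ncard ≤ (G m).ncard := by
      intro k
      apply Set.ncard_le_ncard_of_injOn (fun w => w.take m) _ _ (Gfin m)
      · rintro w ⟨⟨i, hi, rfl⟩, -⟩
        refine ⟨⟨i, hi, ?_⟩, by simp [seg_len]⟩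
        simp [wordSeg, ← List.map_take, List.take_range]
      · rintro w ⟨⟨i, hi, rfl⟩, -⟩ w' ⟨⟨j, hj, rfl⟩, -⟩ h
        apply hk k i j hi hj
        simpa [wordSeg, ← List.map_take, List.take_range] using h
    have hM := hx (m + ((G m).ncard + N))
    have hsub : {u ∈ Fac x | u.length = m + ((G m).ncard + N)} ⊆
        G (m + ((G m).ncard + N)) ∪
          (fun i => wordSeg x i (m + ((G m).ncard + N))) '' (Set.Iio N) := by
      rintro w ⟨hw, hl⟩
      obtain ⟨i, hi⟩ := (mem_iff x w).1 hw
      rw [hl] at hi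
      by_cases h : N ≤ i
      · exact Or.inl ⟨⟨i, h, hi⟩, hl⟩
      · exact Or.inr ⟨i, by simpa using h, hi.symm⟩
    have hN : (Set.Iio N).Finite := Set.finite_Iio N
    have h1 := Set.ncard_le_ncard hsub ((Gfin _).union (hN.image _))
    have h2 := Set.ncard_union_le (G (m + ((G m).ncard + N)))
      ((fun i => wordSeg x i (m + ((G m).ncard + N))) '' (Set.Iio N))
    have h3 := Set.ncard_image_le (f := fun i => wordSeg x i (m + ((G m).ncard + N))) hN
    have h4 : (Set.Iio N).ncard = N := by
      rw [Set.ncard_eq_toFinset_card']; simp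
    have h5 := hcard ((G m).ncard + N)
    unfold complexity at hM
    omega
  have hgrow : ∀ m, m + 1 ≤ (G m).ncard := by
    intro m
    induction m with
    | zero =>
      have : (G 0).Nonempty := ⟨[], ⟨N, le_rfl, by simp [wordSeg]⟩, rfl⟩
      have := (Set.ncard_pos (Gfin 0)).2 this
      omega
    | succ m ih =>
      have h1 : (G m).ncard < (G (m + 1)).ncard := by
        by_contra hlt
        push Not at hlt
        apply nodet m
        intro i j hi hj hij
        have himg : G m ⊆ (fun w => w.take m) '' (G (m + 1)) := by
          rintro w ⟨⟨i, hi, rfl⟩, -⟩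
          refine ⟨wordSeg x i (m + 1), ⟨⟨i, hi, rfl⟩, seg_len _ _ _⟩, ?_⟩
          simp [wordSeg, ← List.map_take, List.take_range]
        have hinj : Set.InjOn (fun w : List Bool => w.take m) (G (m + 1)) := by
          apply Set.injOn_of_ncard_image_eq _ (Gfin _)
          apply le_antisymm (Set.ncard_image_le (Gfin _))
          exact hlt.trans (Set.ncard_le_ncard himg ((Gfin _).image _))
        apply hinj ⟨⟨i, hi, rfl⟩, seg_len _ _ _⟩ ⟨⟨j, hj, rfl⟩, seg_len _ _ _⟩
        simpa [wordSeg, ← List.map_take, List.take_range] using hij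
      omega
  have hss : G u.length ⊂ {w ∈ Fac x | w.length = u.length} := by
    refine ⟨?_, ?_⟩
    · rintro w ⟨⟨i, hi, rfl⟩, hl⟩
      exact ⟨seg_mem _ _ _, hl⟩
    · intro h
      obtain ⟨⟨i, hi, h'⟩, -⟩ := h ⟨hu, rfl⟩
      exact hcon i hi h'
  have h1 := Set.ncard_lt_ncard hss (fin_len _ _)
  have h2 := hx u.length
  unfold complexity at h2
  have h3 := hgrow u.length
  omega

lemma left_ext (x : ℕ → Bool) (hr : Recurrent x) (u : List Bool) (h : u ∈ Fac x) :
    ∃ a, a :: u ∈ Fac x := by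
  obtain ⟨i, hi, h⟩ := hr u h 1
  obtain ⟨j, rfl⟩ : ∃ j, i = j + 1 := ⟨i - 1, by omega⟩
  refine ⟨x j, ?_⟩
  have := seg_cons x j u.length
  rw [← h] at this
  rw [← this]; exact seg_mem _ _ _

/-- right special -/
def RS (x : ℕ → Bool) (u : List Bool) : Prop := ∀ a, u ++ [a] ∈ Fac x

/-- left special -/
def LS (x : ℕ → Bool) (u : List Bool) : Prop := ∀ a, a :: u ∈ Fac x

lemma two_bool {p : Bool → Prop} {a b : Bool} (hab : a ≠ b) (ha : p a) (hb : p b) : ∀ c, p c := by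
  intro c
  by_cases h : c = a
  · rw [h]; exact ha
  · have : c = b := by clear ha hb; revert hab h; revert a b c; decide
    rw [this]; exact hb

lemma RS_of (x : ℕ → Bool) {u : List Bool} {a b : Bool} (hab : a ≠ b) (ha : u ++ [a] ∈ Fac x)
    (hb : u ++ [b] ∈ Fac x) : RS x u := two_bool (p := fun c => u ++ [c] ∈ Fac x) hab ha hb

lemma LS_of (x : ℕ → Bool) {u : List Bool} {a b : Bool} (hab : a ≠ b) (ha : a :: u ∈ Fac x)
    (hb : b :: u ∈ Fac x) : LS x u := two_bool (p := fun c => c :: u ∈ Fac x) hab ha hb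

lemma RS_main (x : ℕ → Bool) (hx : ∀ n : ℕ, complexity (Fac x) n = n + 1) (n : ℕ) :
    (∃ u, u.length = n ∧ RS x u) ∧
    (∀ u v, u.length = n → v.length = n → RS x u → RS x v → u = v) := by
  have key := count_abs {u ∈ Fac x | u.length = n + 1} {u ∈ Fac x | u.length = n}
    (fin_len _ _) (fin_len _ _) (fun u => u.dropLast)
    (by
      rintro a ⟨ha, hl⟩
      refine ⟨?_, by simp [hl]⟩
      have hne : a ≠ [] := by rintro rfl; simp at hl
      rw [← List.dropLast_append_getLast hne] at ha
      exact mem_pre x _ _ ha)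
    (by
      rintro b ⟨hb, hl⟩
      obtain ⟨a, ha⟩ := right_ext x b hb
      exact ⟨b ++ [a], ⟨ha, by simp [hl]⟩, by simp⟩)
    (by have h1 := hx n; have h2 := hx (n + 1); unfold complexity at h1 h2; omega)
  obtain ⟨⟨a, ⟨ha, hla⟩, b, ⟨hb, hlb⟩, hab, hd⟩, huniq⟩ := key
  constructor
  · have hna : a ≠ [] := by rintro rfl; simp at hla
    have hnb : b ≠ [] := by rintro rfl; simp at hlb
    rw [← List.dropLast_append_getLast hna] at ha hab
    rw [← List.dropLast_append_getLast hnb] at hb hab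
    rw [← hd] at hb hab
    refine ⟨a.dropLast, by simp [hla], RS_of x ?_ ha hb⟩
    intro h
    rw [h] at hab
    exact hab rfl
  · intro u v hu hv hru hrv
    have := huniq (u ++ [true]) ⟨hru _, by simp [hu]⟩ (u ++ [false]) ⟨hru _, by simp [hu]⟩
      (v ++ [true]) ⟨hrv _, by simp [hv]⟩ (v ++ [false]) ⟨hrv _, by simp [hv]⟩
      (by simp) (by simp) (by simp) (by simp)
    simpa using this

lemma LS_main (x : ℕ → Bool) (hx : ∀ n : ℕ, complexity (Fac x) n = n + 1) (n : ℕ) :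
    (∃ u, u.length = n ∧ LS x u) ∧
    (∀ u v, u.length = n → v.length = n → LS x u → LS x v → u = v) := by
  have key := count_abs {u ∈ Fac x | u.length = n + 1} {u ∈ Fac x | u.length = n}
    (fin_len _ _) (fin_len _ _) (fun u => u.tail)
    (by
      rintro a ⟨ha, hl⟩
      refine ⟨?_, by simp [hl]⟩
      cases a with
      | nil => simp at hl
      | cons c a => exact mem_tail x _ _ ha)
    (by
      rintro b ⟨hb, hl⟩
      obtain ⟨a, ha⟩ := left_ext x (recur x hx) b hb
      exact ⟨a :: b, ⟨ha, by simp [hl]⟩, by simp⟩)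
    (by have h1 := hx n; have h2 := hx (n + 1); unfold complexity at h1 h2; omega)
  obtain ⟨⟨a, ⟨ha, hla⟩, b, ⟨hb, hlb⟩, hab, hd⟩, huniq⟩ := key
  constructor
  · cases a with
    | nil => simp at hla
    | cons c a =>
      cases b with
      | nil => simp at hlb
      | cons d b =>
        simp only [List.tail_cons] at hd
        subst hd
        refine ⟨a, by simpa using hla, LS_of x ?_ ha hb⟩
        rintro rfl
        exact hab rfl
  · intro u v hu hv hru hrv
    have := huniq (true :: u) ⟨hru _, by simp [hu]⟩ (false :: u) ⟨hru _, by simp [hu]⟩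
      (true :: v) ⟨hrv _, by simp [hv]⟩ (false :: v) ⟨hrv _, by simp [hv]⟩
      (by simp) (by simp) (by simp) (by simp)
    simpa using this

/-- the two-sided word `r 0 1 l` -/
def zW (r l : ℕ → Bool) (i : ℤ) : Bool :=
  if 1 ≤ i then l (i - 1).toNat else if i = 0 then true else if i = -1 then false
  else r (-2 - i).toNat

lemma exists_z (x : ℕ → Bool) (hx : ∀ n : ℕ, complexity (Fac x) n = n + 1) :
    ∃ z : ℤ → Bool, z (-1) = false ∧ z 0 = true ∧ (∀ n : ℕ, RS x (wordSegZ z (-n - 1) n)) ∧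
      (∀ n : ℕ, LS x (wordSegZ z 1 n)) := by
  choose R hRl hR using fun n => (RS_main x hx n).1
  choose L hLl hL using fun n => (LS_main x hx n).1
  have hr : ∀ n, ∃ a, R (n + 1) = a :: R n := by
    intro n
    have hl := hRl (n + 1)
    cases h : R (n + 1) with
    | nil => rw [h] at hl; simp at hl
    | cons a w =>
      refine ⟨a, ?_⟩
      rw [h] at hl
      have : w = R n := by
        apply (RS_main x hx n).2 _ _ (by simpa using hl) (hRl n) _ (hR n)
        intro b
        have := hR (n + 1) b
        rw [h] at this
        exact mem_tail x _ a this
      rw [this]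
  have hl : ∀ n, ∃ a, L (n + 1) = L n ++ [a] := by
    intro n
    have hl := hLl (n + 1)
    have hne : L (n + 1) ≠ [] := by intro h; rw [h] at hl; simp at hl
    refine ⟨(L (n + 1)).getLast hne, ?_⟩
    have : (L (n + 1)).dropLast = L n := by
      apply (LS_main x hx n).2 _ _ (by simp [hl]) (hLl n) _ (hL n)
      intro b
      have := hL (n + 1) b
      rw [← List.dropLast_append_getLast hne, ← List.cons_append] at this
      exact mem_pre x _ _ this
    rw [← this, List.dropLast_append_getLast]
  choose r hr using hr
  choose l hl using hl
  refine ⟨zW r l, by simp [zW], by simp [zW], ?_, ?_⟩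
  · intro n
    have : wordSegZ (zW r l) (-n - 1) n = R n := by
      induction n with
      | zero => simpa [wordSegZ] using (List.length_eq_zero_iff.1 (hRl 0)).symm
      | succ n ih =>
        rw [segZ_cons, hr]
        have e : -((n + 1 : ℕ) : ℤ) - 1 + 1 = -n - 1 := by push_cast; ring
        rw [e, ih]
        congr 1
        have e1 : (-2 - (-((n + 1 : ℕ) : ℤ) - 1)).toNat = n := by omega
        unfold zW
        rw [e1, if_neg (by omega), if_neg (by omega), if_neg (by omega)]
    rw [this]; exact hR n
  · intro n
    have : wordSegZ (zW r l) 1 n = L n := by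
      induction n with
      | zero => simpa [wordSegZ] using (List.length_eq_zero_iff.1 (hLl 0)).symm
      | succ n ih =>
        rw [segZ_snoc, hl, ih]
        have e1 : (1 + (n : ℤ) - 1).toNat = n := by omega
        unfold zW
        rw [e1, if_pos (by omega)]
    rw [this]; exact hL n

lemma snoc_inj {u v : List A} {a b : A} (h : u ++ [a] = v ++ [b]) : u = v ∧ a = b := by
  have h1 := List.append_inj' h rfl
  exact ⟨h1.1, by simpa using h1.2⟩

/-- distinctness of windows -/
def Dist (z : ℤ → Bool) (n : ℕ) : Prop :=
  ∀ i j : ℤ, -n ≤ i → i ≤ 0 → -n ≤ j → j ≤ 0 → wordSegZ z i n = wordSegZ z j n → i = j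

/-- the windows are factors -/
def Cov (x : ℕ → Bool) (z : ℤ → Bool) (n : ℕ) : Prop :=
  ∀ i : ℤ, -n ≤ i → i ≤ 0 → wordSegZ z i n ∈ Fac x

lemma cover (x : ℕ → Bool) (hx : ∀ n : ℕ, complexity (Fac x) n = n + 1) (z : ℤ → Bool) (n : ℕ)
    (hD : Dist z n) (hC : Cov x z n) (u : List Bool) (hu : u ∈ Fac x) (hl : u.length = n) :
    ∃ i : ℤ, -n ≤ i ∧ i ≤ 0 ∧ u = wordSegZ z i n := by
  have hsub : (fun i : ℤ => wordSegZ z i n) '' (Set.Icc (-n : ℤ) 0) ⊆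
      {u ∈ Fac x | u.length = n} := by
    rintro w ⟨i, ⟨h1, h2⟩, rfl⟩
    exact ⟨hC i h1 h2, segZ_len _ _ _⟩
  have hinj : Set.InjOn (fun i : ℤ => wordSegZ z i n) (Set.Icc (-n : ℤ) 0) :=
    fun i hi j hj h => hD i j hi.1 hi.2 hj.1 hj.2 h
  have hc := Set.ncard_image_of_injOn hinj
  have hc2 : (Set.Icc (-n : ℤ) 0).ncard = n + 1 := by
    rw [Set.ncard_eq_toFinset_card']; simp; omega
  have h1 := hx n
  unfold complexity at h1
  have := Set.eq_of_subset_of_ncard_le hsub (by omega) (fin_len _ _)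
  have hm : u ∈ {u ∈ Fac x | u.length = n} := ⟨hu, hl⟩
  rw [← this] at hm
  obtain ⟨i, ⟨h1, h2⟩, h3⟩ := hm
  exact ⟨i, h1, h2, h3.symm⟩

lemma Dist_succ (x : ℕ → Bool) (hx : ∀ n : ℕ, complexity (Fac x) n = n + 1) (z : ℤ → Bool)
    (h0 : z (-1) = false) (h1 : z 0 = true) (hR : ∀ n : ℕ, RS x (wordSegZ z (-n - 1) n))
    (hL : ∀ n : ℕ, LS x (wordSegZ z 1 n)) (n : ℕ) (hD : Dist z n) (hC : Cov x z n)
    (hC' : Cov x z (n + 1)) : Dist z (n + 1) := by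
  have main : ∀ i j : ℤ, -(n + 1 : ℕ) ≤ i → i < j → j ≤ 0 →
      wordSegZ z i (n + 1) ≠ wordSegZ z j (n + 1) := by
    intro i j hi hij hj h
    have hp : wordSegZ z i n = wordSegZ z j n := by
      rw [segZ_snoc, segZ_snoc] at h; exact (snoc_inj h).1
    have hs : wordSegZ z (i + 1) n = wordSegZ z (j + 1) n := by
      rw [segZ_cons, segZ_cons] at h; exact (List.cons.inj h).2
    by_cases hi' : -(n : ℤ) ≤ i
    · have := hD i j hi' (by omega) (by omega) hj hp; omega
    have hi2 : i = -n - 1 := by push_cast at hi; omega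
    by_cases hj' : j ≤ -1
    · have := hD (i + 1) (j + 1) (by omega) (by omega) (by omega) (by omega) hs; omega
    have hj2 : j = 0 := by omega
    subst hi2 hj2
    cases n with
    | zero =>
      rw [segZ_cons, segZ_cons] at h
      have := (List.cons.inj h).1
      simp [h0, h1] at this
    | succ m =>
      -- the other extension of the right special word
      have hext := hR (m + 1) true
      rw [segZ_cons, List.cons_append] at hext
      set y := wordSegZ z (-((m + 1 : ℕ) : ℤ) - 1 + 1) m ++ [true] with hy
      have hyl : y.length = m + 1 := by simp [hy, segZ_len]
      obtain ⟨k, hk1, hk2, hk⟩ := cover x hx z (m + 1) hD hC y (mem_tail x _ _ hext) hyl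
      by_cases hk3 : k = -((m + 1 : ℕ) : ℤ)
      · rw [hy, segZ_snoc] at hk
        have := (snoc_inj hk).2
        have e : k + (m : ℤ) = -1 := by rw [hk3]; push_cast; ring
        rw [e, h0] at this
        cases this
      · have hw := hC' (k - 1) (by push_cast at *; omega) (by omega)
        rw [segZ_cons, sub_add_cancel, ← hk] at hw
        by_cases hz : z (-((m + 1 : ℕ) : ℤ) - 1) = z (k - 1)
        · have : wordSegZ z (k - 1) (m + 1 + 1) = wordSegZ z 0 (m + 1) ++ [true] := by
            rw [← hp, segZ_cons, sub_add_cancel, ← hk, hy, ← hz, segZ_cons, List.cons_append]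
          rw [segZ_snoc] at this
          have := hD _ _ (by push_cast at *; omega) (by omega) (by push_cast; omega) le_rfl
            (snoc_inj this).1
          omega
        · have hls := LS_of x hz hext hw
          have := (LS_main x hx (m + 1)).2 _ _ hyl (segZ_len _ _ _) hls (hL (m + 1))
          rw [zero_add] at hs
          rw [← hs, hk] at this
          have := hD _ _ hk1 hk2 (by push_cast; omega) (by push_cast; omega) this
          apply hk3
          push_cast at *; omega
  intro i j hi hi0 hj hj0 h
  rcases lt_trichotomy i j with hlt | heq | hgt
  · exact absurd h (main i j hi hlt hj0)
  · exact heq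
  · exact absurd h.symm (main j i hj hgt hi0)

lemma Cov_succ (x : ℕ → Bool) (hx : ∀ n : ℕ, complexity (Fac x) n = n + 1) (z : ℤ → Bool)
    (h0 : z (-1) = false) (h1 : z 0 = true) (hR : ∀ n : ℕ, RS x (wordSegZ z (-n - 1) n))
    (hL : ∀ n : ℕ, LS x (wordSegZ z 1 n)) (n : ℕ) (hD : Dist z n)
    (hC' : Cov x z (n + 1)) (hD' : Dist z (n + 1)) : Cov x z (n + 2) := by
  have hrec := recur x hx
  intro i hi hi0
  by_cases e1 : i = 0
  · subst e1
    rw [segZ_cons, zero_add]; exact hL _ _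
  by_cases e2 : i = -(n + 2 : ℕ)
  · rw [segZ_snoc]
    have : i = -((n + 1 : ℕ) : ℤ) - 1 := by rw [e2]; push_cast; ring
    rw [this]; exact hR _ _
  have hi1 : -(n : ℤ) - 1 ≤ i := by push_cast at *; omega
  have hi2 : i ≤ -1 := by omega
  -- left part and right part
  have hav : z i :: wordSegZ z (i + 1) n ∈ Fac x := by
    rw [← segZ_cons]; exact hC' i (by push_cast; omega) (by omega)
  have hvb : wordSegZ z (i + 1) n ++ [z (i + 1 + n)] ∈ Fac x := by
    rw [← segZ_snoc]; exact hC' (i + 1) (by push_cast; omega) (by omega)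
  have hgoal : wordSegZ z i (n + 2) = z i :: (wordSegZ z (i + 1) n ++ [z (i + 1 + n)]) := by
    rw [segZ_cons, segZ_snoc]
  by_cases hrs : RS x (wordSegZ z (i + 1) n)
  swap
  · obtain ⟨c, hc⟩ := right_ext x _ hav
    rw [List.cons_append] at hc
    by_cases hcb : c = z (i + 1 + n)
    · rw [hgoal, ← hcb]; exact hc
    · exact absurd (RS_of x hcb (mem_tail x _ _ hc) hvb) hrs
  by_cases hls : LS x (wordSegZ z (i + 1) n)
  swap
  · obtain ⟨c, hc⟩ := left_ext x hrec _ hvb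
    by_cases hcb : c = z i
    · rw [hgoal, ← hcb]; exact hc
    · rw [← List.cons_append] at hc
      exact absurd (LS_of x hcb (mem_pre x _ _ hc) hav) hls
  by_contra hcon
  rw [hgoal] at hcon
  have hw : wordSegZ z (i + 1) n = wordSegZ z (-n - 1) n :=
    (RS_main x hx n).2 _ _ (segZ_len _ _ _) (segZ_len _ _ _) hrs (hR n)
  have hb : z (i + 1 + n) ≠ z (-1) := by
    intro hb
    have : wordSegZ z (i + 1) (n + 1) = wordSegZ z (-n - 1) (n + 1) := by
      rw [segZ_snoc, segZ_snoc, hw, hb]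
      congr 3; ring
    have := hD' _ _ (by push_cast; omega) (by omega) (by push_cast; omega) (by omega) this
    omega
  -- start
  obtain ⟨p, hp⟩ := (mem_iff x _).1 (hR n (z (-1)))
  have hp0 : wordSeg x p (n + 1) = wordSegZ z (-n - 1) (n + 1) := by
    rw [List.length_append, segZ_len, List.length_singleton] at hp
    rw [← hp, segZ_snoc]
    congr 3; ring
  have hind : ∀ k : ℕ, ∃ j : ℤ, -n - 1 ≤ j ∧ j ≤ i ∧
      wordSeg x (p + k) (n + 1) = wordSegZ z j (n + 1) := by
    intro k
    induction k with
    | zero => exact ⟨-n - 1, le_rfl, hi1, hp0⟩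
    | succ k ih =>
      obtain ⟨j, hj1, hj2, hj⟩ := ih
      have hfull := seg_mem x (p + k) (n + 2)
      have hsuf : wordSeg x (p + k + 1) n = wordSegZ z (j + 1) n := by
        rw [seg_cons, segZ_cons] at hj; exact (List.cons.inj hj).2
      have hnext : wordSeg x (p + (k + 1)) (n + 1) =
          wordSegZ z (j + 1) n ++ [x (p + k + 1 + n)] := by
        rw [← Nat.add_assoc, seg_snoc, hsuf]
      have hmem := seg_mem x (p + (k + 1)) (n + 1)
      rw [hnext] at hmem
      by_cases hji : j = i
      · subst hji
        refine ⟨-n - 1, le_rfl, hi1, ?_⟩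
        have hne : x (p + k + 1 + n) ≠ z (j + 1 + n) := by
          intro he
          apply hcon
          rw [← he, ← hsuf, ← seg_snoc]
          have : z j = x (p + k) := by
            rw [seg_cons, segZ_cons] at hj; exact (List.cons.inj hj).1.symm
          rw [this, ← seg_cons]
          exact hfull
        have he : x (p + k + 1 + n) = z (-1) := by
          revert hne hb
          generalize x (p + k + 1 + n) = a
          generalize z (j + 1 + n) = b
          generalize z (-1) = c
          revert a b c; decide
        rw [hnext, hw, he, segZ_snoc]
        congr 3; ring
      · refine ⟨j + 1, by omega, by omega, ?_⟩
        have hm2 := hC' (j + 1) (by push_cast; omega) (by omega)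
        rw [segZ_snoc] at hm2
        rw [hnext, segZ_snoc]
        by_cases he : x (p + k + 1 + n) = z (j + 1 + n)
        · rw [he]
        · have hrs2 := RS_of x he hmem hm2
          have := (RS_main x hx n).2 _ _ (segZ_len _ _ _) (segZ_len _ _ _) hrs2 hrs
          have := hD _ _ (by omega) (by omega) (by omega) (by omega) this
          omega
  obtain ⟨q, hq, hq2⟩ := hrec _ hvb p
  obtain ⟨k, rfl⟩ : ∃ k, q = p + k := ⟨q - p, by omega⟩
  obtain ⟨j, hj1, hj2, hj⟩ := hind k
  rw [List.length_append, segZ_len, List.length_singleton, hj, ← segZ_snoc] at hq2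
  have := hD' _ _ (by push_cast; omega) (by omega) (by push_cast; omega) (by omega) hq2
  omega

lemma all_n (x : ℕ → Bool) (hx : ∀ n : ℕ, complexity (Fac x) n = n + 1) (z : ℤ → Bool)
    (h0 : z (-1) = false) (h1 : z 0 = true) (hR : ∀ n : ℕ, RS x (wordSegZ z (-n - 1) n))
    (hL : ∀ n : ℕ, LS x (wordSegZ z 1 n)) (n : ℕ) :
    Dist z n ∧ Cov x z n ∧ Cov x z (n + 1) := by
  induction n with
  | zero =>
    refine ⟨?_, ?_, ?_⟩
    · intro i j _ _ _ _ _
      simp at *; omega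
    · intro i _ _
      have : wordSegZ z i 0 = wordSeg x 0 0 := by simp [wordSegZ, wordSeg]
      rw [this]; exact seg_mem _ _ _
    · intro i hi hi0
      have : i = 0 ∨ i = -1 := by push_cast at hi; omega
      rcases this with rfl | rfl
      · rw [segZ_cons]; exact hL 0 _
      · rw [segZ_snoc]; exact hR 0 _
  | succ n ih =>
    obtain ⟨a, b, c⟩ := ih
    have d := Dist_succ x hx z h0 h1 hR hL n a b c
    exact ⟨d, c, Cov_succ x hx z h0 h1 hR hL n a c d⟩

lemma compl_one (f : ℕ → List Bool) (hf : ∀ n, (f n).length = n) (n : ℕ) :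
    complexity (Set.range f) n = 1 := by
  unfold complexity
  rw [Set.ncard_eq_one]
  refine ⟨f n, ?_⟩
  ext u
  constructor
  · rintro ⟨⟨k, rfl⟩, h⟩
    rw [hf] at h
    rw [h]; rfl
  · rintro rfl
    exact ⟨⟨n, rfl⟩, hf n⟩

lemma part1 (x : ℕ → Bool) (hx : ∀ n : ℕ, complexity (Fac x) n = n + 1) :
    ∃ S T : Set (List Bool),
      (∀ n : ℕ, complexity S n = 1) ∧ (∀ n : ℕ, complexity T n = 1) ∧
      Fac x ⊆ prodL S T := by
  obtain ⟨z, h0, h1, hR, hL⟩ := exists_z x hx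
  refine ⟨Set.range fun k : ℕ => wordSegZ z (-k) k, Set.range fun k : ℕ => wordSegZ z 0 k,
    compl_one _ fun _ => segZ_len _ _ _, compl_one _ fun _ => segZ_len _ _ _, ?_⟩
  intro u hu
  obtain ⟨a, b, -⟩ := all_n x hx z h0 h1 hR hL u.length
  obtain ⟨i, hi, hi0, h⟩ := cover x hx z _ a b u hu rfl
  obtain ⟨k, rfl⟩ : ∃ k : ℕ, i = -k := ⟨(-i).toNat, by omega⟩
  obtain ⟨m, hm⟩ : ∃ m : ℕ, u.length = k + m := ⟨u.length - k, by omega⟩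
  refine ⟨_, ⟨k, rfl⟩, _, ⟨m, rfl⟩, ?_⟩
  rw [hm, segZ_append] at h
  simpa using h

end SturmAux

/-- for a Sturmian word `x` there are languages `S, T` with exactly one
word of each length such that `Fac(x) ⊆ S T`; consequently `d₀(x) = 2`. -/
theorem stmt1 (x : ℕ → Bool) (hx : ∀ n : ℕ, complexity (Fac x) n = n + 1) :
    (∃ S T : Set (List Bool),
      (∀ n : ℕ, complexity S n = 1) ∧ (∀ n : ℕ, complexity T n = 1) ∧
      Fac x ⊆ prodL S T) ∧
    polyDim 0 (Fac x) = 2 := by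
  refine ⟨SturmAux.part1 x hx, ?_⟩
  obtain ⟨S, T, hS, hT, hST⟩ := SturmAux.part1 x hx
  apply le_antisymm
  · apply sInf_le
    refine ⟨2, by norm_num, by norm_num, S ∪ T, ⟨2, ?_⟩, ?_⟩
    · intro n _
      rw [Real.rpow_zero, mul_one]
      have h1 : {u ∈ S ∪ T | u.length = n} = {u ∈ S | u.length = n} ∪ {u ∈ T | u.length = n} := by
        ext u; simp [or_and_right]
      have h2 := Set.ncard_union_le {u ∈ S | u.length = n} {u ∈ T | u.length = n}
      have h3 := hS n
      have h4 := hT n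
      unfold complexity at *
      rw [h1]
      have : ({u ∈ S | u.length = n} ∪ {u ∈ T | u.length = n}).ncard ≤ 2 := by omega
      exact_mod_cast this
    · intro u hu
      obtain ⟨s, hs, t, ht, rfl⟩ := hST hu
      exact ⟨s, ⟨[], rfl, s, Or.inl hs, rfl⟩, t, Or.inr ht, rfl⟩
  · apply le_sInf
    rintro k ⟨m, rfl, hm, S', ⟨C, hC⟩, hsub⟩
    by_contra hlt
    have hm2 : m < 2 := by
      rw [not_le] at hlt
      exact_mod_cast hlt
    obtain rfl : m = 1 := by omega
    have hs : Fac x ⊆ S' := by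
      intro u hu
      obtain ⟨s, hs, t, ht, rfl⟩ := hsub hu
      have : s = [] := hs
      rw [this]; exact ht
    obtain ⟨n, hn⟩ := exists_nat_gt C
    have h1 := hC (n + 1) (by omega)
    rw [Real.rpow_zero, mul_one] at h1
    have h2 := hx (n + 1)
    have h3 : complexity (Fac x) (n + 1) ≤ complexity S' (n + 1) :=
      Set.ncard_le_ncard (fun u hu => ⟨hs hu.1, hu.2⟩) (SturmAux.fin_len _ _)
    have h4 : n ≤ complexity S' (n + 1) := by omega
    have h5 : (n : ℝ) ≤ complexity S' (n + 1) := by exact_mod_cast h4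
    linarith
end

section
/- For every real α ≥ 0 and every language L ⊆ A*, one has d*_{α+1}(L) ≤ d_α(L) ≤ 2 · d*_{α+1}(L). -/
open scoped ENNReal Pointwise

universe u

variable {A : Type u}

theorem greedy_cut {W : Type*} (len : W → ℕ) (h M N : ℕ)
    (hN : N < M * h) (F : Finset W) (hF : F.card ≤ N) (hlen : ∀ w ∈ F, 4 * h ≤ len w) :
    ∃ c : W → ℕ, (∀ w ∈ F, h ≤ c w ∧ c w < 3 * h) ∧
      (∀ r, (F.filter (fun w => c w = r)).card ≤ M) ∧
      (∀ r, (F.filter (fun w => len w - c w = r)).card ≤ M) := by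
  classical
  induction F using Finset.induction_on with
  | empty => exact ⟨fun _ => 0, by simp, by simp, by simp⟩
  | insert a F ha ih =>
    rw [Finset.card_insert_of_notMem ha] at hF
    obtain ⟨c, hc, h1, h2⟩ := ih (by omega) (fun w hw => hlen w (Finset.mem_insert_of_mem hw))
    have hla := hlen a (Finset.mem_insert_self _ _)
    -- bad positions
    have key : ∀ f : W → ℕ, ∀ g : ℕ → ℕ, Set.InjOn g (Finset.Ico h (3 * h) : Finset ℕ) →
        ((Finset.Ico h (3 * h)).filter
          (fun r => M ≤ (F.filter (fun w => f w = g r)).card)).card < h := by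
      intro f g hg
      set B := (Finset.Ico h (3 * h)).filter
          (fun r => M ≤ (F.filter (fun w => f w = g r)).card) with hB
      have e1 : B.card * M ≤ ∑ r ∈ B, (F.filter (fun w => f w = g r)).card := by
        rw [← smul_eq_mul]
        apply Finset.card_nsmul_le_sum
        intro r hr
        exact (Finset.mem_filter.1 hr).2
      have e2 : ∑ r ∈ B, (F.filter (fun w => f w = g r)).card ≤ F.card := by
        rw [← Finset.card_biUnion]
        · apply Finset.card_le_card
          intro w hw
          simp only [Finset.mem_biUnion, Finset.mem_filter] at hw
          obtain ⟨_, _, hw, _⟩ := hw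
          exact hw
        · intro x hx y hy hxy
          rw [Function.onFun, Finset.disjoint_left]
          intro w hw hw'
          apply hxy
          apply hg
          · exact (Finset.mem_filter.1 hx).1
          · exact (Finset.mem_filter.1 hy).1
          · rw [← (Finset.mem_filter.1 hw).2, ← (Finset.mem_filter.1 hw').2]
      by_contra hcon
      push Not at hcon
      have : h * M ≤ B.card * M := Nat.mul_le_mul_right _ hcon
      nlinarith
    have k1 := key c id (Set.injOn_id _)
    have k2 := key (fun w => len w - c w) (fun r => len a - r) (by
      intro x hx y hy hxy
      simp only [Finset.coe_Ico, Set.mem_Ico] at hx hy hxy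
      omega)
    have : ∃ r ∈ Finset.Ico h (3 * h), (F.filter (fun w => c w = r)).card < M ∧
        (F.filter (fun w => len w - c w = len a - r)).card < M := by
      by_contra hcon
      push Not at hcon
      have hsub : Finset.Ico h (3 * h) ⊆ ((Finset.Ico h (3 * h)).filter
          (fun r => M ≤ (F.filter (fun w => c w = id r)).card)) ∪ ((Finset.Ico h (3 * h)).filter
          (fun r => M ≤ (F.filter (fun w => len w - c w = len a - r)).card)) := by
        intro r hr
        rw [Finset.mem_union, Finset.mem_filter, Finset.mem_filter]
        by_cases hh : (F.filter (fun w => c w = r)).card < M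
        · exact Or.inr ⟨hr, hcon r hr hh⟩
        · exact Or.inl ⟨hr, not_lt.1 hh⟩
      have := (Finset.card_le_card hsub).trans (Finset.card_union_le _ _)
      rw [Nat.card_Ico] at this
      omega
    obtain ⟨r, hr, hr1, hr2⟩ := this
    have upd : ∀ w ∈ F, Function.update c a r w = c w := by
      intro w hw
      rw [Function.update_of_ne]
      rintro rfl
      exact ha hw
    refine ⟨Function.update c a r, ?_, ?_, ?_⟩
    · intro w hw
      rcases Finset.mem_insert.1 hw with rfl | hw
      · simpa using hr
      · rw [upd w hw]; exact hc w hw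
    · intro q
      rw [Finset.filter_insert, Finset.filter_congr (q := fun w => c w = q)
        (fun w hw => by rw [upd w hw])]
      split_ifs with hq
      · rw [Function.update_self] at hq
        subst hq
        exact (Finset.card_insert_le _ _).trans hr1
      · exact h1 q
    · intro q
      rw [Finset.filter_insert, Finset.filter_congr (q := fun w => len w - c w = q)
        (fun w hw => by rw [upd w hw])]
      split_ifs with hq
      · rw [Function.update_self] at hq
        subst hq
        exact (Finset.card_insert_le _ _).trans hr2
      · exact h2 q

theorem finite_len (A : Type u) [Fintype A] (S : Set (List A)) (n : ℕ) :
    {w ∈ S | w.length = n}.Finite :=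
  (List.finite_length_eq A n).subset (fun _ hw => hw.2)

theorem finite_len_lt (A : Type u) [Fintype A] (S : Set (List A)) (n : ℕ) :
    {w ∈ S | w.length < n}.Finite :=
  (List.finite_length_lt A n).subset (fun _ hw => hw.2)

theorem ncard_lt_le_acc (A : Type u) [Fintype A] (S : Set (List A)) (n : ℕ) :
    {w ∈ S | w.length < n}.ncard ≤ accComplexity S n := by
  classical
  rw [Set.ncard_eq_toFinset_card _ (finite_len_lt A S n)]
  have : (finite_len_lt A S n).toFinset ⊆
      (Finset.range (n + 1)).biUnion (fun i => (finite_len A S i).toFinset) := by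
    intro w hw
    simp at hw ⊢
    exact ⟨by omega, hw.1⟩
  refine (Finset.card_le_card this).trans (Finset.card_biUnion_le.trans ?_)
  apply le_of_eq
  apply Finset.sum_congr rfl
  intro i _
  rw [complexity, Set.ncard_eq_toFinset_card _ (finite_len A S i)]

/-- One dyadic scale. -/
theorem scale_cut (A : Type u) [Fintype A] (S : Set (List A)) (h : ℕ) (hh : 1 ≤ h) :
    ∃ T : Set (List A), (∀ t ∈ T, h ≤ t.length ∧ t.length < 8 * h) ∧
      (∀ w ∈ S, 4 * h ≤ w.length → w.length < 8 * h → w ∈ prodL T T) ∧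
      ∀ n, complexity T n ≤ 2 * (accComplexity S (8 * h) / h + 1) := by
  classical
  set N := accComplexity S (8 * h)
  set M := N / h + 1
  let F := (finite_len_lt A S (8 * h)).toFinset.filter (fun w => 4 * h ≤ w.length)
  have hF : F.card ≤ N := by
    refine (Finset.card_filter_le _ _).trans ?_
    rw [← Set.ncard_eq_toFinset_card _ (finite_len_lt A S (8 * h))]
    exact ncard_lt_le_acc A S _
  have hNM : N < M * h := by
    have := Nat.lt_div_mul_add (a := N) (b := h) hh
    simp only [M]; nlinarith
  have memF : ∀ w, w ∈ F ↔ (w ∈ S ∧ w.length < 8 * h) ∧ 4 * h ≤ w.length := by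
    intro w; simp [F]
  obtain ⟨c, hc, h1, h2⟩ := greedy_cut List.length h M N hNM F hF
    (fun w hw => ((memF w).1 hw).2)
  refine ⟨(fun w : List A => w.take (c w)) '' F ∪ (fun w : List A => w.drop (c w)) '' F, ?_, ?_, ?_⟩
  · rintro t (⟨w, hw, rfl⟩ | ⟨w, hw, rfl⟩)
    · have := hc w hw
      have := (memF w).1 hw
      simp only [List.length_take]; omega
    · have := hc w hw
      have := (memF w).1 hw
      simp only [List.length_drop]; omega
  · intro w hw hl hu
    have hwF : w ∈ F := (memF w).2 ⟨⟨hw, hu⟩, hl⟩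
    exact ⟨_, Or.inl ⟨w, hwF, rfl⟩, _, Or.inr ⟨w, hwF, rfl⟩, (List.take_append_drop _ _).symm⟩
  · intro n
    have hsub : {u ∈ (fun w : List A => w.take (c w)) '' (F : Set (List A)) ∪
        (fun w : List A => w.drop (c w)) '' (F : Set (List A)) | u.length = n} ⊆
        (((F.filter (fun w => c w = n)).image (fun w : List A => w.take (c w)) ∪
        (F.filter (fun w => w.length - c w = n)).image (fun w : List A => w.drop (c w)) : Finset (List A)) :
          Set (List A)) := by
      rintro t ⟨(⟨w, hw, rfl⟩ | ⟨w, hw, rfl⟩), hn⟩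
      · rw [Finset.mem_coe, Finset.mem_union]
        left
        apply Finset.mem_image_of_mem (fun w : List A => w.take (c w))
        have := hc w hw
        have := (memF w).1 hw
        simp only [List.length_take] at hn
        exact Finset.mem_filter.2 ⟨hw, by omega⟩
      · rw [Finset.mem_coe, Finset.mem_union]
        right
        apply Finset.mem_image_of_mem (fun w : List A => w.drop (c w))
        simp only [List.length_drop] at hn
        exact Finset.mem_filter.2 ⟨hw, hn⟩
    unfold complexity
    refine (Set.ncard_le_ncard hsub (Finset.finite_toSet _)).trans ?_
    rw [Set.ncard_coe_finset]
    refine (Finset.card_union_le _ _).trans ?_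
    have a1 := Finset.card_image_le (s := F.filter (fun w => c w = n))
      (f := fun w => w.take (c w))
    have a2 := Finset.card_image_le (s := F.filter (fun w => w.length - c w = n))
      (f := fun w => w.drop (c w))
    have := h1 n
    have := h2 n
    omega

theorem split_lang (A : Type u) [Fintype A] (α : ℝ) (hα : 0 ≤ α) (S : Set (List A))
    (hS : PolyBound (accComplexity S) (α + 1)) :
    ∃ T : Set (List A), PolyBound (complexity T) α ∧ S ⊆ prodL T T := by
  classical
  obtain ⟨C, hC⟩ := hS
  have hC0 : 0 ≤ C := by
    have := hC 1 le_rfl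
    simp at this
    exact le_trans (by positivity) this
  choose T hT1 hT2 hT3 using fun j : ℕ => scale_cut A S (2 ^ j) Nat.one_le_two_pow
  let U : Set (List A) := {w | w.length < 4}
  have hUf : U.Finite := List.finite_length_lt A 4
  set K : ℝ := C * 8 ^ (α + 1) + 1 with hK
  have hK0 : 0 ≤ K := by positivity
  have bound : ∀ j n l : ℕ, 2 ^ j ≤ l → (complexity (T j) n : ℝ) ≤ 2 * K * (l : ℝ) ^ α := by
    intro j n l hl
    have hh : (1 : ℝ) ≤ ((2 ^ j : ℕ) : ℝ) := by exact_mod_cast Nat.one_le_two_pow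
    have b1 : (complexity (T j) n : ℝ) ≤
        2 * ((accComplexity S (8 * 2 ^ j) : ℝ) / ((2 ^ j : ℕ) : ℝ) + 1) := by
      have := hT3 j n
      have h' : (complexity (T j) n : ℝ) ≤
        2 * (((accComplexity S (8 * 2 ^ j) / 2 ^ j : ℕ) : ℝ) + 1) := by exact_mod_cast this
      have := Nat.cast_div_le (α := ℝ) (m := accComplexity S (8 * 2 ^ j)) (n := 2 ^ j)
      linarith
    have b2 := hC (8 * 2 ^ j) (by have := Nat.one_le_two_pow (n := j); omega)
    generalize 2 ^ j = h at *
    have hpos : (0 : ℝ) < h := by linarith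
    have b3 : (accComplexity S (8 * h) : ℝ) / h ≤ C * 8 ^ (α + 1) * (h : ℝ) ^ α := by
      rw [div_le_iff₀ hpos]
      refine b2.trans (le_of_eq ?_)
      push_cast
      rw [Real.mul_rpow (by norm_num) hpos.le, Real.rpow_add_one hpos.ne']
      ring
    have b4 : (1 : ℝ) ≤ (h : ℝ) ^ α := Real.one_le_rpow hh hα
    have b5 : (h : ℝ) ^ α ≤ (l : ℝ) ^ α :=
      Real.rpow_le_rpow hpos.le (by exact_mod_cast hl) hα
    have b6 : K * (h : ℝ) ^ α ≤ K * (l : ℝ) ^ α := mul_le_mul_of_nonneg_left b5 hK0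
    have b7 : K * (h : ℝ) ^ α = C * 8 ^ (α + 1) * (h : ℝ) ^ α + (h : ℝ) ^ α := by rw [hK]; ring
    linarith
  refine ⟨U ∪ ⋃ j, T j, ⟨U.ncard + 6 * K, ?_⟩, ?_⟩
  · intro n hn
    set l := Nat.log 2 n
    have hl : 2 ^ l ≤ n := Nat.pow_log_le_self 2 (by omega)
    have hl1 : 2 ^ (l - 1) ≤ n := (Nat.pow_le_pow_right (by norm_num) (by omega)).trans hl
    have hl2 : 2 ^ (l - 2) ≤ n := (Nat.pow_le_pow_right (by norm_num) (by omega)).trans hl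
    have hsub : {u ∈ U ∪ ⋃ j, T j | u.length = n} ⊆ U ∪ ({u ∈ T l | u.length = n} ∪
        ({u ∈ T (l - 1) | u.length = n} ∪ {u ∈ T (l - 2) | u.length = n})) := by
      rintro u ⟨hu | hu, hun⟩
      · exact Or.inl hu
      · right
        obtain ⟨j, hj⟩ := Set.mem_iUnion.1 hu
        have := hT1 j u hj
        rw [hun] at this
        have j1 : j ≤ l := Nat.le_log_of_pow_le (by norm_num) this.1
        have j2 : l < j + 3 := by
          apply Nat.log_lt_of_lt_pow (by omega)
          rw [pow_add]; omega
        have : j = l ∨ j = l - 1 ∨ j = l - 2 := by omega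
        rcases this with rfl | rfl | rfl
        · exact Or.inl ⟨hj, hun⟩
        · exact Or.inr (Or.inl ⟨hj, hun⟩)
        · exact Or.inr (Or.inr ⟨hj, hun⟩)
    have hcard : complexity (U ∪ ⋃ j, T j) n ≤ U.ncard + (complexity (T l) n +
        (complexity (T (l - 1)) n + complexity (T (l - 2)) n)) := by
      unfold complexity
      refine (Set.ncard_le_ncard hsub (hUf.union ((finite_len A _ n).union
        ((finite_len A _ n).union (finite_len A _ n))))).trans ?_
      refine (Set.ncard_union_le _ _).trans (Nat.add_le_add_left ?_ _)
      refine (Set.ncard_union_le _ _).trans (Nat.add_le_add_left ?_ _)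
      exact Set.ncard_union_le _ _
    have hcard' : (complexity (U ∪ ⋃ j, T j) n : ℝ) ≤ U.ncard + (complexity (T l) n +
        (complexity (T (l - 1)) n + complexity (T (l - 2)) n)) := by exact_mod_cast hcard
    have c1 := bound l n n hl
    have c2 := bound (l - 1) n n hl1
    have c3 := bound (l - 2) n n hl2
    have c4 : (1 : ℝ) ≤ (n : ℝ) ^ α := Real.one_le_rpow (by exact_mod_cast hn) hα
    have c5 : (U.ncard : ℝ) ≤ U.ncard * (n : ℝ) ^ α := le_mul_of_one_le_right (by positivity) c4
    linarith
  · intro w hw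
    by_cases h4 : w.length < 4
    · exact ⟨[], Or.inl (by simp [U]), w, Or.inl h4, rfl⟩
    · have hl : 2 ^ Nat.log 2 w.length ≤ w.length := Nat.pow_log_le_self 2 (by omega)
      have hu : w.length < 2 ^ (Nat.log 2 w.length + 1) := Nat.lt_pow_succ_log_self (by norm_num) _
      have h2 : 2 ≤ Nat.log 2 w.length := Nat.le_log_of_pow_le (by norm_num) (by omega)
      obtain ⟨j, hj⟩ := Nat.exists_eq_add_of_le' h2
      rw [hj] at hl hu
      have e1 : 2 ^ (j + 2) = 4 * 2 ^ j := by ring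
      have e2 : 2 ^ (j + 2 + 1) = 8 * 2 ^ j := by ring
      obtain ⟨s, hs, t, ht, e⟩ := hT2 j w hw (by omega) (by omega)
      exact ⟨s, Or.inr (Set.mem_iUnion.2 ⟨j, hs⟩), t, Or.inr (Set.mem_iUnion.2 ⟨j, ht⟩), e⟩

theorem powL_double (A : Type u) (S T : Set (List A)) (h : S ⊆ prodL T T) (m : ℕ) :
    powL S m ⊆ powL T (2 * m) := by
  induction m with
  | zero => exact fun _ hw => hw
  | succ m ih =>
    rintro w ⟨s, hs, t, ht, rfl⟩
    obtain ⟨x, hx, y, hy, rfl⟩ := h ht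
    exact ⟨s ++ x, ⟨s, ih hs, x, hx, rfl⟩, y, hy, by simp⟩

theorem acc_of_complexity (A : Type u) (α : ℝ) (hα : 0 ≤ α) (S : Set (List A))
    (hS : PolyBound (complexity S) α) : PolyBound (accComplexity S) (α + 1) := by
  obtain ⟨C, hC⟩ := hS
  have hC0 : 0 ≤ C := by
    have := hC 1 le_rfl
    simp at this
    exact le_trans (by positivity) this
  refine ⟨complexity S 0 + C, fun n hn => ?_⟩
  have hn' : (1 : ℝ) ≤ n := by exact_mod_cast hn
  rw [accComplexity, Finset.sum_range_succ']
  push_cast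
  have h1 : ∑ i ∈ Finset.range n, (complexity S (i + 1) : ℝ) ≤
      ∑ i ∈ Finset.range n, C * (n : ℝ) ^ α := by
    apply Finset.sum_le_sum
    intro i hi
    refine (hC (i + 1) (by omega)).trans ?_
    apply mul_le_mul_of_nonneg_left _ hC0
    apply Real.rpow_le_rpow (by positivity) _ hα
    have := Finset.mem_range.1 hi
    exact_mod_cast this
  rw [Finset.sum_const, Finset.card_range, nsmul_eq_mul] at h1
  have h2 : (1 : ℝ) ≤ (n : ℝ) ^ (α + 1) := Real.one_le_rpow hn' (by linarith)
  have h3 : (n : ℝ) ^ (α + 1) = (n : ℝ) ^ α * n := Real.rpow_add_one (by linarith) α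
  have h4 : (complexity S 0 : ℝ) ≤ complexity S 0 * (n : ℝ) ^ (α + 1) :=
    le_mul_of_one_le_right (by positivity) h2
  have h5 : (n : ℝ) * (C * (n : ℝ) ^ α) = C * (n : ℝ) ^ (α + 1) := by rw [h3]; ring
  linarith

/-- `d*_{α+1}(L) ≤ d_α(L) ≤ 2 d*_{α+1}(L)`. -/
theorem stmt4 (A : Type u) [Fintype A] [Nonempty A] (α : ℝ) (hα : 0 ≤ α)
    (L : Set (List A)) :
    polyDimStar (α + 1) L ≤ polyDim α L ∧ polyDim α L ≤ 2 * polyDimStar (α + 1) L := by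
  constructor
  · apply sInf_le_sInf
    rintro k ⟨m, rfl, hm, S, hS, hL⟩
    exact ⟨m, rfl, hm, S, acc_of_complexity A α hα S hS, hL⟩
  · by_cases hne : {k : ℕ∞ | ∃ m : ℕ, k = m ∧ 1 ≤ m ∧
        ∃ S : Set (List A), PolyBound (accComplexity S) (α + 1) ∧ L ⊆ powL S m}.Nonempty
    · obtain ⟨m, hk, hm, S, hS, hL⟩ := csInf_mem hne
      obtain ⟨T, hT, hST⟩ := split_lang A α hα S hS
      unfold polyDimStar
      rw [hk]
      apply sInf_le
      exact ⟨2 * m, by push_cast; rfl, by omega, T, hT, hL.trans (powL_double A S T hST m)⟩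
    · rw [Set.not_nonempty_iff_eq_empty] at hne
      unfold polyDimStar
      rw [hne, sInf_empty, ENat.mul_top (by norm_num)]
      exact le_top
end

section
/- Let α ≥ 0 be a real number and T ⊆ A* a language with p*_T(n) = O(n^{α+1}). Then there exists a language S ⊆ A* with p_S(n) = O(n^α) such that T ⊆ S^2. -/
open scoped ENNReal Pointwise

universe u

variable {A : Type u}

theorem bad_card {ι : Type u} [DecidableEq ι] (B : Finset ι) (g : ι → ℕ) (K : ℕ) (P : Finset ℕ)
    (hP : ∀ i ∈ P, K ≤ (B.filter (fun w => g w = i)).card) : P.card * K ≤ B.card := by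
  have h1 : P.card * K ≤ ∑ i ∈ P, (B.filter (fun w => g w = i)).card := by
    have := Finset.card_nsmul_le_sum P (fun i => (B.filter (fun w => g w = i)).card) K hP
    simpa using this
  refine h1.trans ?_
  rw [← Finset.card_biUnion]
  · apply Finset.card_le_card
    intro w hw
    simp only [Finset.mem_biUnion, Finset.mem_filter] at hw
    obtain ⟨_, _, h, _⟩ := hw
    exact h
  · intro i _ j _ hij
    rw [Function.onFun, Finset.disjoint_left]
    intro w hw hw'
    simp only [Finset.mem_filter] at hw hw'
    exact hij (hw.2.symm.trans hw'.2)

theorem greedy {ι : Type u} [DecidableEq ι] (I : Finset ℕ) (len : ι → ℕ) (K : ℕ)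
    (B : Finset ι) : (∀ w ∈ B, ∀ i ∈ I, i ≤ len w) → 2 * B.card < I.card * K →
    ∃ f : ι → ℕ, (∀ w, f w ∈ I) ∧ ∀ n, (B.filter (fun w => f w = n)).card ≤ K ∧
      (B.filter (fun w => len w - f w = n)).card ≤ K := by
  induction B using Finset.induction_on with
  | empty =>
    intro _ h
    have hI : I.Nonempty := by
      rw [Finset.nonempty_iff_ne_empty]
      rintro rfl
      simp at h
    obtain ⟨i, hi⟩ := hI
    exact ⟨fun _ => i, fun _ => hi, by simp⟩
  | insert a B ha ih =>
    intro hlen hcard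
    rw [Finset.card_insert_of_notMem ha] at hcard
    obtain ⟨f, hfI, hf⟩ := ih (fun w hw => hlen w (Finset.mem_insert_of_mem hw)) (by omega)
    have hla := hlen a (Finset.mem_insert_self _ _)
    set P := I.filter (fun i => K ≤ (B.filter (fun w => f w = i)).card) with hP
    set Q := I.filter (fun i => K ≤ (B.filter (fun w => len w - f w = len a - i)).card) with hQ
    have h1 : P.card * K ≤ B.card := bad_card B f K P (by
      intro i hi
      exact (Finset.mem_filter.1 hi).2)
    have h2 : Q.card * K ≤ B.card := by
      have hinj : (Q.image (fun i => len a - i)).card = Q.card := by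
        apply Finset.card_image_of_injOn
        intro i hi j hj hij
        have := hla i (Finset.mem_filter.1 hi).1
        have := hla j (Finset.mem_filter.1 hj).1
        simp only at hij
        omega
      rw [← hinj]
      apply bad_card B (fun w => len w - f w)
      intro i hi
      obtain ⟨j, hj, rfl⟩ := Finset.mem_image.1 hi
      exact (Finset.mem_filter.1 hj).2
    have h3 : (P ∪ Q).card < I.card := by
      have h4 := Finset.card_union_le P Q
      by_contra h5
      have : I.card * K ≤ (P.card + Q.card) * K := Nat.mul_le_mul_right _ (by omega)
      rw [add_mul] at this
      omega
    obtain ⟨i, hi, hiPQ⟩ := Finset.exists_mem_notMem_of_card_lt_card h3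
    have hiP : (B.filter (fun w => f w = i)).card < K := by
      by_contra h
      exact hiPQ (Finset.mem_union_left _ (Finset.mem_filter.2 ⟨hi, by omega⟩))
    have hiQ : (B.filter (fun w => len w - f w = len a - i)).card < K := by
      by_contra h
      exact hiPQ (Finset.mem_union_right _ (Finset.mem_filter.2 ⟨hi, by omega⟩))
    refine ⟨Function.update f a i, ?_, ?_⟩
    · intro w
      by_cases h : w = a
      · subst h; simpa using hi
      · simpa [Function.update_of_ne h] using hfI w
    · intro n
      have e1 : B.filter (fun w => Function.update f a i w = n) = B.filter (fun w => f w = n) := by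
        apply Finset.filter_congr
        intro w hw
        rw [Function.update_of_ne (by rintro rfl; exact ha hw)]
      have e2 : B.filter (fun w => len w - Function.update f a i w = n)
          = B.filter (fun w => len w - f w = n) := by
        apply Finset.filter_congr
        intro w hw
        rw [Function.update_of_ne (by rintro rfl; exact ha hw)]
      constructor
      · rw [Finset.filter_insert, e1]
        split_ifs with h
        · simp only [Function.update_self] at h
          subst h
          exact (Finset.card_insert_le _ _).trans hiP
        · exact (hf n).1
      · rw [Finset.filter_insert, e2]
        split_ifs with h
        · simp only [Function.update_self] at h
          subst h
          exact (Finset.card_insert_le _ _).trans hiQ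
        · exact (hf n).2

theorem block_card (A : Type u) [Fintype A] (T : Set (List A)) (B : Finset (List A)) (n : ℕ)
    (hB : ∀ w ∈ B, w ∈ T ∧ w.length ≤ n) : B.card ≤ accComplexity T n := by
  classical
  rw [Finset.card_eq_sum_card_fiberwise (f := List.length) (t := Finset.range (n + 1))]
  · unfold accComplexity
    apply Finset.sum_le_sum
    intro i _
    unfold complexity
    rw [← Set.ncard_coe_finset]
    apply Set.ncard_le_ncard
    · intro w hw
      simp only [Finset.coe_filter, Set.mem_setOf_eq] at hw
      exact ⟨(hB w hw.1).1, hw.2⟩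
    · exact (List.finite_length_eq A i).subset (fun w hw => hw.2)
  · intro w hw
    have := (hB w hw).2
    simp
    omega

theorem block_exists (A : Type u) [Fintype A] (α : ℝ) (hα : 0 ≤ α)
    (T : Set (List A)) (C : ℝ) (hC0 : 0 ≤ C)
    (hC : ∀ n : ℕ, 1 ≤ n → (accComplexity T n : ℝ) ≤ C * (n : ℝ) ^ (α + 1)) (k : ℕ) :
    ∃ (B : Finset (List A)) (f : List A → ℕ) (K : ℕ),
      (∀ w, w ∈ B ↔ w ∈ T ∧ w ≠ [] ∧ Nat.log 2 w.length = k) ∧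
      (∀ w, 2 ^ k / 4 ≤ f w ∧ f w ≤ 2 ^ k - 2 ^ k / 4) ∧
      (K : ℝ) ≤ (8 * C + 1) * ((2 * 2 ^ k : ℕ) : ℝ) ^ α ∧
      ∀ n, ((B.filter (fun w => f w = n)).card ≤ K) ∧
      ((B.filter (fun w => w.length - f w = n)).card ≤ K) := by
  classical
  have hlog : ∀ w : List A, w ≠ [] → Nat.log 2 w.length = k →
      2 ^ k ≤ w.length ∧ w.length < 2 * 2 ^ k := by
    intro w hw hk
    have h0 : w.length ≠ 0 := by simpa using hw
    have := (Nat.log_eq_iff (b := 2) (m := k) (n := w.length) (Or.inr ⟨by norm_num, h0⟩)).1 hk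
    rw [pow_succ] at this
    omega
  have hfin : {w : List A | w ∈ T ∧ w ≠ [] ∧ Nat.log 2 w.length = k}.Finite := by
    apply (List.finite_length_le A (2 * 2 ^ k)).subset
    rintro w ⟨_, hw, hk⟩
    exact (hlog w hw hk).2.le
  set q := 2 ^ k with hq
  have hq1 : 1 ≤ q := Nat.one_le_two_pow
  set B := hfin.toFinset with hB
  have hBm : ∀ w, w ∈ B ↔ w ∈ T ∧ w ≠ [] ∧ Nat.log 2 w.length = k := by
    intro w; rw [hB, Set.Finite.mem_toFinset]; rfl
  have hcard : (B.card : ℝ) ≤ C * ((2 * q : ℕ) : ℝ) ^ (α + 1) := by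
    refine le_trans ?_ (hC (2 * q) (by omega))
    exact_mod_cast block_card A T B (2 * q) (fun w hw => by
      obtain ⟨h1, h2, h3⟩ := (hBm w).1 hw
      exact ⟨h1, (hlog w h2 h3).2.le⟩)
  have hpos : (1 : ℝ) ≤ ((2 * q : ℕ) : ℝ) ^ α := by
    apply Real.one_le_rpow _ hα
    exact_mod_cast (by omega : 1 ≤ 2 * q)
  set X := ((2 * q : ℕ) : ℝ) ^ α with hX
  set K := ⌊8 * C * X⌋₊ + 1 with hK
  have hK1 : 8 * C * X < K := by
    rw [hK]; push_cast; exact Nat.lt_floor_add_one _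
  have hK2 : (K : ℝ) ≤ (8 * C + 1) * X := by
    have := Nat.floor_le (a := 8 * C * X) (by positivity)
    rw [hK]; push_cast; linarith
  have hI : q ≤ 2 * (Finset.Icc (q / 4) (q - q / 4)).card := by
    rw [Nat.card_Icc]; omega
  obtain ⟨f, hf1, hf2⟩ := greedy (Finset.Icc (q / 4) (q - q / 4)) List.length K B (by
      intro w hw i hi
      obtain ⟨h1, h2, h3⟩ := (hBm w).1 hw
      have := (hlog w h2 h3).1
      have := (Finset.mem_Icc.1 hi).2
      omega) (by
      have hI' : (q : ℝ) ≤ 2 * ((Finset.Icc (q / 4) (q - q / 4)).card : ℝ) := by exact_mod_cast hI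
      have hqr : (1 : ℝ) ≤ q := by exact_mod_cast hq1
      rw [Real.rpow_add_one (by positivity), ← hX] at hcard
      push_cast at hcard
      have h5 : (q : ℝ) * (8 * C * X) < q * K := by
        apply mul_lt_mul_of_pos_left hK1; linarith
      have h6 : (q : ℝ) * K ≤ 2 * ((Finset.Icc (q / 4) (q - q / 4)).card : ℝ) * K := by
        gcongr
      have : (2 * B.card : ℝ) < ((Finset.Icc (q / 4) (q - q / 4)).card : ℝ) * K := by
        nlinarith
      exact_mod_cast this)
  exact ⟨B, f, K, hBm, fun w => Finset.mem_Icc.1 (hf1 w), hK2, hf2⟩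

/-- if `p*_T(n) = O(n^{α+1})` then `T ⊆ S²` for some `S` with
`p_S(n) = O(n^α)`. -/
theorem stmt5 (A : Type u) [Fintype A] [Nonempty A] (α : ℝ) (hα : 0 ≤ α)
    (T : Set (List A)) (hT : PolyBound (accComplexity T) (α + 1)) :
    ∃ S : Set (List A), PolyBound (complexity S) α ∧ T ⊆ powL S 2 := by
  classical
  obtain ⟨C, hC⟩ := hT
  have hC0 : 0 ≤ C := by
    have := hC 1 le_rfl
    simp at this
    exact le_trans (Nat.cast_nonneg _) this
  choose B f K hB hf hK hcnt using block_exists A α hα T C hC0 hC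
  have hlog : ∀ k, ∀ w ∈ B k, 2 ^ k ≤ w.length ∧ w.length < 2 * 2 ^ k := by
    intro k w hw
    obtain ⟨_, hw, hk⟩ := (hB k w).1 hw
    have h0 : w.length ≠ 0 := by simpa using hw
    have := (Nat.log_eq_iff (b := 2) (m := k) (n := w.length) (Or.inr ⟨by norm_num, h0⟩)).1 hk
    rw [pow_succ] at this
    omega
  refine ⟨{u | u = [] ∨ ∃ k, ∃ w ∈ B k, u = w.take (f k w) ∨ u = w.drop (f k w)}, ?_, ?_⟩
  · refine ⟨8 * ((8 * C + 1) * 16 ^ α), ?_⟩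
    intro n hn
    set L := Nat.log 2 n with hL
    set V : Finset (List A) := (Finset.Icc L (L + 3)).biUnion (fun k =>
      ((B k).filter (fun w => f k w = n)).image (fun w => w.take (f k w)) ∪
      ((B k).filter (fun w => w.length - f k w = n)).image (fun w => w.drop (f k w))) with hV
    have hkL : ∀ k, 2 ^ k / 4 ≤ n → n < 2 * 2 ^ k → k ∈ Finset.Icc L (L + 3) := by
      intro k h1 h2
      rw [Finset.mem_Icc]
      have h3 : 2 ^ L ≤ n := Nat.pow_log_le_self 2 (by omega)
      have h4 : n < 2 ^ (L + 1) := Nat.lt_pow_succ_log_self (by norm_num) n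
      constructor
      · have : 2 ^ L < 2 ^ (k + 1) := by rw [pow_succ]; omega
        have := (Nat.pow_lt_pow_iff_right (a := 2) (by norm_num)).1 this
        omega
      · have : 2 ^ k < 2 ^ (L + 4) := by
          rw [pow_succ] at h4
          rw [pow_add]
          omega
        have := (Nat.pow_lt_pow_iff_right (a := 2) (by norm_num)).1 this
        omega
    have hsub : complexity {u | u = [] ∨ ∃ k, ∃ w ∈ B k, u = w.take (f k w) ∨ u = w.drop (f k w)} n
        ≤ V.card := by
      unfold complexity
      rw [← Set.ncard_coe_finset]
      apply Set.ncard_le_ncard _ (Finset.finite_toSet _)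
      rintro u ⟨hu, hun⟩
      rcases hu with rfl | ⟨k, w, hw, hu⟩
      · simp at hun; omega
      · have hl := hlog k w hw
        have hfk := hf k w
        rw [Finset.mem_coe, hV, Finset.mem_biUnion]
        rcases hu with rfl | rfl
        · rw [List.length_take] at hun
          refine ⟨k, hkL k (by omega) (by omega), Finset.mem_union_left _ ?_⟩
          exact Finset.mem_image.2 ⟨w, Finset.mem_filter.2 ⟨hw, by omega⟩, rfl⟩
        · rw [List.length_drop] at hun
          refine ⟨k, hkL k (by omega) (by omega), Finset.mem_union_right _ ?_⟩
          exact Finset.mem_image.2 ⟨w, Finset.mem_filter.2 ⟨hw, by omega⟩, rfl⟩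
    have hVc : (V.card : ℝ) ≤ ∑ k ∈ Finset.Icc L (L + 3), (2 * K k : ℝ) := by
      have : V.card ≤ ∑ k ∈ Finset.Icc L (L + 3), (2 * K k) := by
        refine Finset.card_biUnion_le.trans (Finset.sum_le_sum ?_)
        intro k _
        refine (Finset.card_union_le _ _).trans ?_
        have h1 := (Finset.card_image_le (s := (B k).filter (fun w => f k w = n))
          (f := fun w => w.take (f k w))).trans (hcnt k n).1
        have h2 := (Finset.card_image_le (s := (B k).filter (fun w => w.length - f k w = n))
          (f := fun w => w.drop (f k w))).trans (hcnt k n).2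
        omega
      exact_mod_cast this
    have hKb : ∀ k ∈ Finset.Icc L (L + 3),
        (2 * K k : ℝ) ≤ 2 * ((8 * C + 1) * 16 ^ α) * (n : ℝ) ^ α := by
      intro k hk
      have h1 : 2 * 2 ^ k ≤ 16 * n := by
        have h3 : 2 ^ L ≤ n := Nat.pow_log_le_self 2 (by omega)
        have : 2 ^ k ≤ 2 ^ (L + 3) :=
          Nat.pow_le_pow_right (by norm_num) (Finset.mem_Icc.1 hk).2
        rw [pow_add] at this
        omega
      have h2 : ((2 * 2 ^ k : ℕ) : ℝ) ^ α ≤ 16 ^ α * (n : ℝ) ^ α := by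
        rw [← Real.mul_rpow (by norm_num) (by positivity)]
        apply Real.rpow_le_rpow (by positivity) _ hα
        exact_mod_cast h1
      have h3 := (hK k).trans (mul_le_mul_of_nonneg_left h2 (by positivity))
      linarith
    have hs := Finset.sum_le_card_nsmul _ _ _ hKb
    have hc : (Finset.Icc L (L + 3)).card = 4 := by rw [Nat.card_Icc]; omega
    rw [hc] at hs
    have hsub' : ((complexity {u | u = [] ∨ ∃ k, ∃ w ∈ B k, u = w.take (f k w) ∨
      u = w.drop (f k w)} n : ℕ) : ℝ) ≤ V.card := by exact_mod_cast hsub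
    refine (hsub'.trans (hVc.trans hs)).trans (le_of_eq ?_)
    rw [nsmul_eq_mul]
    push_cast
    ring
  · intro w hw
    simp only [powL, prodL]
    by_cases h : w = []
    · exact ⟨[], ⟨[], rfl, [], Or.inl rfl, rfl⟩, [], Or.inl rfl, by simp [h]⟩
    · have hwB := (hB (Nat.log 2 w.length) w).2 ⟨hw, h, rfl⟩
      exact ⟨_, ⟨[], rfl, _, Or.inr ⟨_, w, hwB, Or.inl rfl⟩, rfl⟩, _,
        Or.inr ⟨_, w, hwB, Or.inr rfl⟩, by simp⟩
end

section
/- For every integer k ≥ 1 there exists a one-sided infinite word x over a finite alphabet such that p_x(n) = Ω(n^{k−1}), d_0(x) = k (in particular Fac(x) is contained in a product of k languages each of bounded complexity, but in no product of fewer than k languages of bounded complexity), and hence x has cost c(x) = 0 and cost dimension k. -/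
open scoped ENNReal Pointwise

universe u

variable {A : Type u}

lemma lsf_finite {A : Type} [Fintype A] (L : Set (List A)) (n : ℕ) :
    {u ∈ L | u.length = n}.Finite :=
  (List.finite_length_eq A n).subset (fun _ h => h.2)

lemma complexity_mono' {A : Type} [Fintype A] {L L' : Set (List A)} (h : L ⊆ L') (n : ℕ) :
    complexity L n ≤ complexity L' n :=
  Set.ncard_le_ncard (fun _ hu => ⟨h hu.1, hu.2⟩) (lsf_finite L' n)

lemma complexity_prodL {A : Type} [Fintype A] (S T : Set (List A)) (n : ℕ) :
    complexity (prodL S T) n ≤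
      ∑ i ∈ Finset.range (n + 1), complexity S i * complexity T (n - i) := by
  classical
  let f : (L : Set (List A)) → ℕ → Finset (List A) := fun L n => (lsf_finite L n).toFinset
  have hf : ∀ L m, complexity L m = (f L m).card := fun L m =>
    Set.ncard_eq_toFinset_card _ (lsf_finite L m)
  have hm : ∀ L m u, u ∈ f L m ↔ u ∈ L ∧ u.length = m := by
    intro L m u; simp [f]
  have hsub : f (prodL S T) n ⊆ (Finset.range (n + 1)).biUnion
      (fun i => Finset.image₂ (· ++ ·) (f S i) (f T (n - i))) := by
    intro u hu
    rw [hm] at hu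
    obtain ⟨⟨s, hs, t, ht, rfl⟩, hl⟩ := hu
    rw [List.length_append] at hl
    rw [Finset.mem_biUnion]
    refine ⟨s.length, by rw [Finset.mem_range]; omega, ?_⟩
    rw [Finset.mem_image₂]
    exact ⟨s, (hm _ _ _).2 ⟨hs, rfl⟩, t, (hm _ _ _).2 ⟨ht, by omega⟩, rfl⟩
  rw [hf]
  refine (Finset.card_le_card hsub).trans (Finset.card_biUnion_le.trans ?_)
  refine Finset.sum_le_sum fun i _ => ?_
  rw [hf, hf]
  exact Finset.card_image₂_le _ _ _

lemma complexity_powL {A : Type} [Fintype A] (S : Set (List A)) (C : ℕ)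
    (hC : ∀ n, complexity S n ≤ C) (m n : ℕ) :
    complexity (powL S (m + 1)) n ≤ C ^ (m + 1) * (n + 1) ^ m := by
  induction m generalizing n with
  | zero =>
    have : powL S 1 = S := by
      ext u; simp [powL, prodL]
    simpa [this] using hC n
  | succ m ih =>
    refine (complexity_prodL (powL S (m + 1)) S n).trans ?_
    have : ∀ i ∈ Finset.range (n + 1), complexity (powL S (m + 1)) i * complexity S (n - i)
        ≤ C ^ (m + 1) * (n + 1) ^ m * C := by
      intro i hi
      rw [Finset.mem_range] at hi
      refine Nat.mul_le_mul ((ih i).trans ?_) (hC _)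
      gcongr
      omega
    refine (Finset.sum_le_sum this).trans ?_
    rw [Finset.sum_const, Finset.card_range, smul_eq_mul]
    apply le_of_eq; ring

lemma lower_dim {A : Type} [Fintype A] (L : Set (List A)) (k : ℕ)
    (hlow : ∃ K : ℝ, 0 < K ∧ ∃ N : ℕ, ∀ n : ℕ, N ≤ n →
        K * (n : ℝ) ^ ((k : ℝ) - 1) ≤ (complexity L n : ℝ))
    (m : ℕ) (hm : 1 ≤ m) (S : Set (List A)) (hS : PolyBound (complexity S) 0)
    (hL : L ⊆ powL S m) : k ≤ m := by
  by_contra hlt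
  push Not at hlt
  obtain ⟨K, hK, N, hN⟩ := hlow
  obtain ⟨C, hC⟩ := hS
  obtain ⟨D, hD⟩ : ∃ D : ℕ, ∀ n, complexity S n ≤ D := by
    refine ⟨⌈C⌉₊ + complexity S 0, fun n => ?_⟩
    rcases Nat.eq_zero_or_pos n with rfl | hn
    · omega
    · have h := hC n hn
      rw [Real.rpow_zero, mul_one] at h
      have : complexity S n ≤ ⌈C⌉₊ := by exact_mod_cast h.trans (Nat.le_ceil C)
      omega
  obtain ⟨m, rfl⟩ : ∃ m', m = m' + 1 := ⟨m - 1, by omega⟩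
  obtain ⟨j, rfl⟩ : ∃ j, k = m + 1 + j + 1 := ⟨k - m - 2, by omega⟩
  obtain ⟨n, hn⟩ := exists_nat_gt ((D : ℝ) ^ (m + 1) * 2 ^ m / K)
  set n' := max n (max N 1) with hn'
  have h1 : n ≤ n' := le_max_left _ _
  have h2 : N ≤ n' := (le_max_left _ _).trans (le_max_right _ _)
  have h3 : 1 ≤ n' := (le_max_right _ _).trans (le_max_right _ _)
  have h4 := hN n' h2
  have h5 : (complexity L n' : ℝ) ≤ (D : ℝ) ^ (m + 1) * ((n' : ℝ) + 1) ^ m := by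
    exact_mod_cast (complexity_mono' hL n').trans (complexity_powL S D hD m n')
  have h6 : (n' : ℝ) ^ (((m + 1 + j + 1 : ℕ) : ℝ) - 1) = (n' : ℝ) ^ (m + 1 + j) := by
    rw [← Real.rpow_natCast]; congr 1; push_cast; ring
  rw [h6] at h4
  have h3' : (1 : ℝ) ≤ n' := by exact_mod_cast h3
  have h1' : (n : ℝ) ≤ n' := by exact_mod_cast h1
  have h7 : (n' : ℝ) ^ (m + 1) ≤ (n' : ℝ) ^ (m + 1 + j) :=
    pow_le_pow_right₀ h3' (by omega)
  have h8 : ((n' : ℝ) + 1) ^ m ≤ 2 ^ m * (n' : ℝ) ^ m := by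
    rw [← mul_pow]
    exact pow_le_pow_left₀ (by positivity) (by linarith) m
  have h9 : K * (n' : ℝ) * (n' : ℝ) ^ m ≤ (D : ℝ) ^ (m + 1) * 2 ^ m * (n' : ℝ) ^ m := by
    calc K * (n' : ℝ) * (n' : ℝ) ^ m = K * (n' : ℝ) ^ (m + 1) := by ring
      _ ≤ K * (n' : ℝ) ^ (m + 1 + j) := by gcongr
      _ ≤ _ := h4.trans h5
      _ ≤ (D : ℝ) ^ (m + 1) * (2 ^ m * (n' : ℝ) ^ m) := by gcongr
      _ = _ := by ring
  have h10 := le_of_mul_le_mul_right h9 (by positivity)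
  rw [div_lt_iff₀ hK] at hn
  nlinarith

lemma finish {A : Type} [Fintype A] (L : Set (List A)) (k : ℕ) (hk : 1 ≤ k)
    (hlow : ∃ K : ℝ, 0 < K ∧ ∃ N : ℕ, ∀ n : ℕ, N ≤ n →
        K * (n : ℝ) ^ ((k : ℝ) - 1) ≤ (complexity L n : ℝ))
    (S : Set (List A)) (C : ℕ) (hS : ∀ n, complexity S n ≤ C) (hL : L ⊆ powL S k) :
    polyDim 0 L = (k : ℕ∞) ∧ cost L = 0 := by
  have h1 : polyDim 0 L = (k : ℕ∞) := by
    apply le_antisymm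
    · apply sInf_le
      refine ⟨k, rfl, hk, S, ⟨C, fun n _ => ?_⟩, hL⟩
      rw [Real.rpow_zero, mul_one]
      exact_mod_cast hS n
    · apply le_sInf
      rintro _ ⟨m, rfl, hm, S', hS', hL'⟩
      exact_mod_cast lower_dim L k hlow m hm S' hS' hL'
  refine ⟨h1, ?_⟩
  apply le_antisymm _ zero_le
  apply sInf_le
  refine ⟨0, le_rfl, by simp, ?_⟩
  rw [h1]; exact ENat.natCast_ne_top k

lemma cons_powL {A : Type} (S : Set (List A)) (s : List A) (hs : s ∈ S) (k : ℕ) (w : List A)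
    (hw : w ∈ powL S k) : s ++ w ∈ powL S (k + 1) := by
  induction k generalizing w with
  | zero =>
    have : w = [] := hw
    subst this
    exact ⟨[], rfl, s, hs, by simp⟩
  | succ k ih =>
    obtain ⟨w', hw', t, ht, rfl⟩ := hw
    exact ⟨s ++ w', ih w' hw', t, ht, by simp⟩

lemma powL_mono_exp {A : Type} (S : Set (List A)) (hS : [] ∈ S) {a b : ℕ} (h : a ≤ b) :
    powL S a ⊆ powL S b := by
  induction h with
  | refl => exact subset_rfl
  | step _ ih => exact fun u hu => ⟨u, ih hu, [], hS, by simp⟩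

lemma decomp (S : Set (List Bool)) (hS : ∀ i, true :: List.replicate i false ∈ S) (u : List Bool) :
    ∃ i v, u = List.replicate i false ++ v ∧ v ∈ powL S (u.count true) := by
  induction u with
  | nil => exact ⟨0, [], rfl, rfl⟩
  | cons b u ih =>
    obtain ⟨i, v, h1, h2⟩ := ih
    cases b with
    | false =>
      refine ⟨i + 1, v, ?_, ?_⟩
      · rw [List.replicate_succ, List.cons_append, ← h1]
      · rw [List.count_cons_of_ne (by simp)]; exact h2
    | true =>
      refine ⟨0, true :: u, rfl, ?_⟩
      rw [List.count_cons_self]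
      have := cons_powL S _ (hS i) _ v h2
      rwa [List.cons_append, ← h1] at this

lemma wordSeg_add {A : Type} (x : ℕ → A) (i a b : ℕ) :
    wordSeg x i (a + b) = wordSeg x i a ++ wordSeg x (i + a) b := by
  simp [wordSeg, List.range_add, Function.comp_def, add_assoc]

lemma wordSeg_length {A : Type} (x : ℕ → A) (i a : ℕ) : (wordSeg x i a).length = a := by
  simp [wordSeg]

/-- The enumeration of clusters (positions of letters `true` relative to the cluster start). -/
noncomputable def clus (h M : ℕ) : Finset ℕ :=
  let G : Finset ℕ := Denumerable.ofNat (Finset ℕ) (Nat.unpair M).1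
  if G.card = h ∧ 0 ∈ G then G else {0}

lemma clus_zero (h M : ℕ) : 0 ∈ clus h M := by
  simp only [clus]; split_ifs with h1
  · exact h1.2
  · simp

lemma clus_card (h M : ℕ) (hh : 1 ≤ h) : (clus h M).card ≤ h := by
  simp only [clus]; split_ifs with h1
  · exact h1.1.le
  · simpa using hh

lemma clus_surj (h n : ℕ) (G : Finset ℕ) (h1 : G.card = h) (h2 : 0 ∈ G) :
    ∃ M, n ≤ M ∧ clus h M = G := by
  refine ⟨Nat.pair (@Encodable.encode _ Denumerable.toEncodable G) n,
    Nat.right_le_pair _ _, ?_⟩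
  simp only [clus, Nat.unpair_pair, Denumerable.ofNat_encode]
  rw [if_pos ⟨h1, h2⟩]

noncomputable def cr (h M : ℕ) : ℕ := (clus h M).sup id + 1

lemma clus_lt (h M f : ℕ) (hf : f ∈ clus h M) : f < cr h M :=
  Nat.lt_succ_of_le (Finset.le_sup (f := id) hf)

noncomputable def cq (h : ℕ) : ℕ → ℕ
  | 0 => 0
  | M + 1 => 2 * cq h M + cr h M + 1

lemma cq_succ (h M : ℕ) : cq h (M + 1) = 2 * cq h M + cr h M + 1 := rfl

lemma cq_strictMono (h : ℕ) : StrictMono (cq h) :=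
  strictMono_nat_of_lt_succ fun M => by rw [cq_succ]; omega

lemma cq_unique (h n M M' : ℕ) (h1 : cq h M ≤ n) (h2 : n < cq h (M + 1))
    (h1' : cq h M' ≤ n) (h2' : n < cq h (M' + 1)) : M = M' := by
  have a := (cq_strictMono h).lt_iff_lt.1 (h1.trans_lt h2')
  have b := (cq_strictMono h).lt_iff_lt.1 (h1'.trans_lt h2)
  omega

lemma cq_exists (h n : ℕ) : ∃ M, cq h M ≤ n ∧ n < cq h (M + 1) := by
  induction n with
  | zero => exact ⟨0, le_rfl, by rw [cq_succ]; omega⟩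
  | succ n ih =>
    obtain ⟨M, h1, h2⟩ := ih
    by_cases hc : n + 1 < cq h (M + 1)
    · exact ⟨M, by omega, hc⟩
    · have := cq_strictMono h (Nat.lt_succ_self (M + 1))
      exact ⟨M + 1, by omega, by simp only [Nat.succ_eq_add_one] at this; omega⟩

open Classical in
noncomputable def cx (h n : ℕ) : Bool :=
  decide (∃ M, cq h M ≤ n ∧ n < cq h (M + 1) ∧ n - cq h M ∈ clus h M)

lemma cx_spec (h n M : ℕ) (h1 : cq h M ≤ n) (h2 : n < cq h (M + 1)) :
    cx h n = true ↔ n - cq h M ∈ clus h M := by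
  unfold cx
  simp only [decide_eq_true_iff]
  constructor
  · rintro ⟨M', a, b, c⟩
    rwa [cq_unique h n M M' h1 h2 a b]
  · intro c; exact ⟨M, h1, h2, c⟩

lemma count_le (h M i n : ℕ) (hh : 1 ≤ h) (h1 : cq h M ≤ i) (h2 : i + n ≤ cq h (M + 1)) :
    (wordSeg (cx h) i n).count true ≤ h := by
  refine le_trans ?_ (clus_card h M hh)
  rw [wordSeg, List.count_eq_countP, List.countP_map, List.countP_eq_length_filter,
    ← List.toFinset_card_of_nodup (List.nodup_range.filter _)]
  apply Finset.card_le_card_of_injOn (fun j => i + j - cq h M)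
  · intro j hj
    simp only [List.coe_toFinset, List.mem_filter, List.mem_range, Function.comp,
      Set.mem_ofPred_eq, beq_iff_eq] at hj
    exact (cx_spec h (i + j) M (by omega) (by omega)).1 hj.2
  · intro a _ b _ hab
    simp only at hab
    omega

def cS (h : ℕ) : Set (List Bool) :=
  {u | ∃ i, u = List.replicate i false} ∪ {u | ∃ i, u = true :: List.replicate i false} ∪
  {u | ∃ M i, i < cq h M + cr h M ∧ u = wordSeg (cx h) i (cq h (M + 1) - i)}

lemma cS_complexity (h n : ℕ) : complexity (cS h) n ≤ 3 := by
  set T := {u : List Bool | (∃ M i, i < cq h M + cr h M ∧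
    u = wordSeg (cx h) i (cq h (M + 1) - i)) ∧ u.length = n} with hT
  have hTs : T.Subsingleton := by
    rintro u ⟨⟨M, i, hi, rfl⟩, hl⟩ v ⟨⟨M', i', hi', rfl⟩, hl'⟩
    rw [wordSeg_length] at hl hl'
    have e := cq_succ h M
    have e' := cq_succ h M'
    have : M = M' := cq_unique h (n - 1) M M' (by omega) (by omega) (by omega) (by omega)
    subst this
    have : i = i' := by omega
    rw [this]
  have hTf : T.Finite := hTs.finite
  have hTc : T.ncard ≤ 1 := (Set.ncard_le_one hTf).2 (fun a ha b hb => hTs ha hb)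
  have hsub : {u ∈ cS h | u.length = n} ⊆
      ({List.replicate n false, true :: List.replicate (n - 1) false} : Set (List Bool)) ∪ T := by
    rintro u ⟨(⟨i, rfl⟩ | ⟨i, rfl⟩) | hu, hl⟩
    · left; left; simp at hl; rw [hl]
    · left; right; simp at hl; simp [← hl]
    · right; exact ⟨hu, hl⟩
  refine (Set.ncard_le_ncard hsub ((Set.toFinite _).union hTf)).trans ?_
  refine (Set.ncard_union_le _ _).trans ?_
  have := Set.ncard_insert_le (List.replicate n false)
    ({true :: List.replicate (n - 1) false} : Set (List Bool))
  rw [Set.ncard_singleton] at this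
  omega

lemma cx_false (h M n : ℕ) (h1 : cq h M + cr h M ≤ n) (h2 : n < cq h (M + 1)) :
    cx h n = false := by
  rw [← Bool.not_eq_true, cx_spec h n M (by omega) h2]
  intro hc
  have := clus_lt _ _ _ hc
  omega

lemma Fac_sub (h : ℕ) (hh : 1 ≤ h) : Fac (cx h) ⊆ powL (cS h) (h + 1) := by
  have hr : ∀ i, List.replicate i false ∈ cS h := fun i => Or.inl (Or.inl ⟨i, rfl⟩)
  have ht : ∀ i, true :: List.replicate i false ∈ cS h := fun i => Or.inl (Or.inr ⟨i, rfl⟩)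
  have h0 : [] ∈ cS h := hr 0
  rintro _ ⟨i, n, rfl⟩
  rcases Nat.eq_zero_or_pos n with rfl | hn
  · exact powL_mono_exp _ h0 (Nat.zero_le _) rfl
  obtain ⟨M, h1, h2⟩ := cq_exists h (i + n - 1)
  by_cases hi : cq h M ≤ i
  · have hc := count_le h M i n hh hi (by omega)
    obtain ⟨a, v, e, hv⟩ := decomp (cS h) ht (wordSeg (cx h) i n)
    rw [e]
    exact cons_powL _ _ (hr a) _ _ (powL_mono_exp _ h0 hc hv)
  · push Not at hi
    have hn' : n = (cq h M - i) + (i + n - cq h M) := by omega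
    rw [hn', wordSeg_add, Nat.add_sub_cancel' hi.le]
    set l := i + n - cq h M with hl
    apply cons_powL
    · obtain ⟨M, rfl⟩ : ∃ M', M = M' + 1 := by
        refine ⟨M - 1, ?_⟩
        rcases M with _ | M
        · simp [cq] at hi
        · simp
      by_cases he : i < cq h M + cr h M
      · exact Or.inr ⟨M, i, he, rfl⟩
      · push Not at he
        refine Or.inl (Or.inl ⟨cq h (M + 1) - i, ?_⟩)
        rw [List.eq_replicate_iff]
        refine ⟨wordSeg_length _ _ _, ?_⟩
        intro b hb
        simp only [wordSeg, List.mem_map, List.mem_range] at hb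
        obtain ⟨j, hj, rfl⟩ := hb
        exact cx_false h M _ (by omega) (by omega)
    · have hc := count_le h M (cq h M) l hh le_rfl (by omega)
      obtain ⟨a, v, e, hv⟩ := decomp (cS h) ht (wordSeg (cx h) (cq h M) l)
      have ha : a = 0 := by
        rcases a with _ | a
        · rfl
        exfalso
        obtain ⟨l', hl'⟩ : ∃ l', l = l' + 1 := ⟨l - 1, by omega⟩
        have hx : cx h (cq h M) = true := by
          rw [cx_spec h _ M le_rfl (by omega)]
          simpa using clus_zero h M
        rw [hl', wordSeg, List.range_succ_eq_map, List.map_cons, List.replicate_succ,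
          List.cons_append, add_zero, hx] at e
        simp at e
      subst ha
      rw [List.replicate_zero, List.nil_append] at e
      rw [← e] at hv
      exact powL_mono_exp _ h0 hc hv

lemma le_cq (h M : ℕ) : M ≤ cq h M := (cq_strictMono h).le_apply

lemma Fac_low (h n : ℕ) (hh : 1 ≤ h) : n.choose h ≤ complexity (Fac (cx h)) n := by
  classical
  let g : Finset ℕ → List Bool := fun T => (List.range n).map fun j => decide (j ∈ T)
  have hmem : ∀ T ∈ Finset.powersetCard h (Finset.range n),
      g T ∈ {u ∈ Fac (cx h) | u.length = n} := by
    intro T hT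
    rw [Finset.mem_powersetCard] at hT
    refine ⟨?_, by simp [g]⟩
    have hne : T.Nonempty := Finset.card_pos.1 (by omega)
    set m := T.min' hne with hm
    have hmT : m ∈ T := Finset.min'_mem _ _
    have hmin : ∀ t ∈ T, m ≤ t := fun t ht => Finset.min'_le _ _ ht
    have hmn : m < n := Finset.mem_range.1 (hT.1 hmT)
    have hG1 : (T.image (· - m)).card = h := by
      rw [Finset.card_image_of_injOn, hT.2]
      intro a ha b hb hab
      have := hmin a ha
      have := hmin b hb
      simp only at hab
      omega
    have hG2 : 0 ∈ T.image (· - m) := Finset.mem_image.2 ⟨m, hmT, by simp⟩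
    obtain ⟨M, hM, hG⟩ := clus_surj h n _ hG1 hG2
    obtain ⟨M, rfl⟩ : ∃ M', M = M' + 1 := ⟨M - 1, by omega⟩
    have e1 := cq_succ h M
    have e2 := cq_succ h (M + 1)
    have l1 := le_cq h M
    have l2 := le_cq h (M + 1)
    refine ⟨cq h (M + 1) - m, n, ?_⟩
    apply List.map_congr_left
    intro t ht
    rw [List.mem_range] at ht
    rw [Bool.eq_iff_iff, decide_eq_true_iff]
    by_cases htm : m ≤ t
    · rw [cx_spec h _ (M + 1) (by omega) (by omega), hG, Finset.mem_image]
      have e3 : cq h (M + 1) - m + t - cq h (M + 1) = t - m := by omega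
      rw [e3]
      constructor
      · intro h'; exact ⟨t, h', rfl⟩
      · rintro ⟨a, ha, hat⟩
        have := hmin a ha
        have : a = t := by omega
        rwa [← this]
    · rw [cx_false h M _ (by omega) (by omega)]
      constructor
      · intro h'; exact absurd (hmin t h') htm
      · intro h'; simp at h'
  have hinj : Set.InjOn g (Finset.powersetCard h (Finset.range n)) := by
    intro T hT T' hT' hg
    rw [Finset.mem_coe, Finset.mem_powersetCard] at hT hT'
    have : ∀ j < n, (j ∈ T ↔ j ∈ T') := by
      intro j hj
      have := List.map_inj_left.1 hg j (List.mem_range.2 hj)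
      simpa using this
    ext j
    constructor
    · intro hj; exact (this j (Finset.mem_range.1 (hT.1 hj))).1 hj
    · intro hj; exact (this j (Finset.mem_range.1 (hT'.1 hj))).2 hj
  have hcard : (Finset.powersetCard h (Finset.range n)).card = n.choose h := by
    rw [Finset.card_powersetCard, Finset.card_range]
  rw [← hcard, ← Finset.card_image_of_injOn hinj, ← Set.ncard_coe_finset]
  apply Set.ncard_le_ncard _ (lsf_finite _ n)
  intro u hu
  rw [Finset.mem_coe, Finset.mem_image] at hu
  obtain ⟨T, hT, rfl⟩ := hu
  exact hmem T hT

theorem stmt8 (k : ℕ) (hk : 1 ≤ k) :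
    ∃ (A : Type) (_ : Fintype A) (_ : Nonempty A) (x : ℕ → A),
      (∃ K : ℝ, 0 < K ∧ ∃ N : ℕ, ∀ n : ℕ, N ≤ n →
        K * (n : ℝ) ^ ((k : ℝ) - 1) ≤ (complexity (Fac x) n : ℝ)) ∧
      polyDim 0 (Fac x) = (k : ℕ∞) ∧
      cost (Fac x) = 0 := by
  obtain ⟨h, rfl⟩ : ∃ h, k = h + 1 := ⟨k - 1, by omega⟩
  have hexp : ∀ n : ℕ, (n : ℝ) ^ (((h + 1 : ℕ) : ℝ) - 1) = (n : ℝ) ^ h := by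
    intro n
    rw [← Real.rpow_natCast]; congr 1; push_cast; ring
  rcases Nat.eq_zero_or_pos h with rfl | hh
  · have hlow : ∃ K : ℝ, 0 < K ∧ ∃ N : ℕ, ∀ n : ℕ, N ≤ n →
        K * (n : ℝ) ^ (((0 + 1 : ℕ) : ℝ) - 1) ≤
          (complexity (Fac (fun _ : ℕ => ())) n : ℝ) := by
      refine ⟨1, one_pos, 0, fun n _ => ?_⟩
      rw [hexp, pow_zero, mul_one]
      have : 1 ≤ complexity (Fac (fun _ : ℕ => ())) n := by
        rw [complexity, Nat.one_le_iff_ne_zero, ← Nat.pos_iff_ne_zero,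
          Set.ncard_pos (lsf_finite _ n)]
        exact ⟨wordSeg (fun _ : ℕ => ()) 0 n, ⟨0, n, rfl⟩, wordSeg_length _ _ _⟩
      exact_mod_cast this
    refine ⟨Unit, inferInstance, inferInstance, fun _ => (), hlow, ?_⟩
    refine finish _ _ (by omega) hlow Set.univ 1 (fun n => ?_) ?_
    · rw [complexity, Set.ncard_le_one (lsf_finite _ n)]
      rintro a ⟨_, ha⟩ b ⟨_, hb⟩
      exact List.ext_getElem (by omega) (fun _ _ _ => rfl)
    · intro u _
      exact ⟨[], rfl, u, trivial, by simp⟩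
  · have hlow : ∃ K : ℝ, 0 < K ∧ ∃ N : ℕ, ∀ n : ℕ, N ≤ n →
        K * (n : ℝ) ^ (((h + 1 : ℕ) : ℝ) - 1) ≤ (complexity (Fac (cx h)) n : ℝ) := by
      refine ⟨((2 : ℝ) ^ h * (h.factorial : ℝ))⁻¹, by positivity, 2 * h, fun n hn => ?_⟩
      rw [hexp]
      have h1 : (n.choose h : ℝ) ≤ (complexity (Fac (cx h)) n : ℝ) := by
        exact_mod_cast Fac_low h n hh
      refine le_trans ?_ h1
      rw [inv_mul_le_iff₀ (by positivity)]
      have h2 : (n + 1 - h) ^ h ≤ h.factorial * n.choose h := by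
        rw [← Nat.descFactorial_eq_factorial_mul_choose]
        exact Nat.pow_sub_le_descFactorial n h
      have h3 : n ^ h ≤ (2 * (n + 1 - h)) ^ h := Nat.pow_le_pow_left (by omega) h
      have h4 : n ^ h ≤ 2 ^ h * h.factorial * n.choose h := by
        rw [mul_pow] at h3
        rw [mul_assoc]
        exact h3.trans (Nat.mul_le_mul_left _ h2)
      exact_mod_cast h4
    exact ⟨Bool, inferInstance, inferInstance, cx h, hlow,
      finish _ _ (by omega) hlow (cS h) 3 (cS_complexity h) (Fac_sub h hh)⟩
end
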